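/- arXiv:2206.03347 — 3 statements merged into one kernel-verified Lean document; each statement's English description precedes it below -/
import Mathlib

section
/- Let Ω⁻, Ω⁺ ⊆ ℝ^d be open convex sets, let c : Ω⁻ × Ω⁺ → ℝ be continuously differentiable with locally Lipschitz gradient (c ∈ C^{1,1}_loc), and let μ⁻, μ⁺ be probability measures compactly supported in Ω⁻, Ω⁺ with densities in L^∞ with respect to Lebesgue measure. Then there exists a constant M ≥ 0 such that for every ε ∈ (0,1): v_ε ≤ v_0 + (d/2)·ε·log(1/ε) + M·ε. -/
open MeasureTheory Real Set Filter Classical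
open scoped ENNReal NNReal Topology

noncomputable section

/-- Relative entropy (Kullback–Leibler divergence) `Ent(γ | q)`, with values in `EReal`:
it equals `∫ ρ log ρ dq` if `γ = ρ·q` (with `ρ log ρ` integrable) and `+∞` otherwise. -/
def Ent {α : Type*} [MeasurableSpace α] (γ q : Measure α) : EReal :=
  if γ ≪ q ∧ Integrable (fun x => ((γ.rnDeriv q) x).toReal * Real.log ((γ.rnDeriv q) x).toReal) q
  then ((∫ x, ((γ.rnDeriv q) x).toReal * Real.log ((γ.rnDeriv q) x).toReal ∂q : ℝ) : EReal)
  else ⊤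

/-- Entropic optimal transport cost
`v_ε = inf { ∫ c dγ + ε Ent(γ | μ⁻ ⊗ μ⁺) : γ coupling of μ⁻ and μ⁺ }`. -/
def entCost {α β : Type*} [MeasurableSpace α] [MeasurableSpace β]
    (μm : Measure α) (μp : Measure β) (c : α × β → ℝ) (ε : ℝ) : EReal :=
  sInf {v : EReal | ∃ γ : Measure (α × β), IsProbabilityMeasure γ ∧ γ.fst = μm ∧ γ.snd = μp ∧
    v = ((∫ p, c p ∂γ : ℝ) : EReal) + (ε : EReal) * Ent γ (μm.prod μp)}

/-- The block approximation `∑ i, (γ i).fst ⊗ (γ i).snd / |γ i|` of the measure `∑ i, γ i`. -/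
def blockMeasure {α β ι : Type*} [MeasurableSpace α] [MeasurableSpace β] [Fintype ι]
    (γ : ι → Measure (α × β)) : Measure (α × β) :=
  ∑ i, ENNReal.ofReal ((γ i).real univ)⁻¹ • (γ i).fst.prod (γ i).snd

section Block

variable {α β ι : Type*} [MeasurableSpace α] [MeasurableSpace β] [Fintype ι]

lemma ofReal_inv_mul_smul_map {δ : Type*} [MeasurableSpace δ] {X : Type*} [MeasurableSpace X]
    (γ : Measure X) [IsFiniteMeasure γ] {f : X → δ} :
    (ENNReal.ofReal (γ.real univ)⁻¹ * γ univ) • γ.map f = γ.map f := by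
  rcases eq_or_ne γ 0 with rfl | h
  · simp
  have h1 : γ univ ≠ 0 := by simpa using h
  have h2 : 0 < γ.real univ := ENNReal.toReal_pos h1 (measure_ne_top _ _)
  rw [ENNReal.ofReal_inv_of_pos h2, measureReal_def, ENNReal.ofReal_toReal (measure_ne_top _ _),
    ENNReal.inv_mul_cancel h1 (measure_ne_top _ _), one_smul]

lemma measure_map_finset_sum {X Y : Type*} [MeasurableSpace X] [MeasurableSpace Y] (γ : ι → Measure X)
    {f : X → Y} (hf : Measurable f) : (∑ i, γ i).map f = ∑ i, (γ i).map f := by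
  ext s hs
  simp [Measure.map_apply hf hs]

lemma blockMeasure_fst (γ : ι → Measure (α × β)) [∀ i, IsFiniteMeasure (γ i)] :
    (blockMeasure γ).fst = (∑ i, γ i).fst := by
  rw [Measure.fst, Measure.fst, blockMeasure, measure_map_finset_sum _ measurable_fst,
    measure_map_finset_sum _ measurable_fst]
  refine Finset.sum_congr rfl fun i _ => ?_
  rw [Measure.map_smul, Measure.map_fst_prod, smul_smul, Measure.snd_univ, Measure.fst,
    ofReal_inv_mul_smul_map]

lemma blockMeasure_snd (γ : ι → Measure (α × β)) [∀ i, IsFiniteMeasure (γ i)] :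
    (blockMeasure γ).snd = (∑ i, γ i).snd := by
  rw [Measure.snd, Measure.snd, blockMeasure, measure_map_finset_sum _ measurable_snd,
    measure_map_finset_sum _ measurable_snd]
  refine Finset.sum_congr rfl fun i _ => ?_
  rw [Measure.map_smul, Measure.map_snd_prod, smul_smul, Measure.fst_univ, Measure.snd,
    ofReal_inv_mul_smul_map]

lemma sum_rnDeriv_eq_one {X : Type*} [MeasurableSpace X] {μ : Measure X} [IsFiniteMeasure μ]
    (ν : ι → Measure X) (h : ∑ i, ν i = μ) :
    ∀ᵐ x ∂μ, ∑ i, ((ν i).rnDeriv μ x).toReal = 1 := by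
  have hle : ∀ i, ν i ≤ μ := fun i => by
    rw [← h]; exact Finset.single_le_sum (f := ν) (fun _ _ => Measure.zero_le _) (Finset.mem_univ i)
  have : ∀ i, IsFiniteMeasure (ν i) := fun i => isFiniteMeasure_of_le μ (hle i)
  have key : μ.withDensity (fun x => ∑ i, (ν i).rnDeriv μ x) = μ.withDensity 1 := by
    ext s hs
    rw [withDensity_one, withDensity_apply _ hs,
      lintegral_finsetSum _ (fun i _ => Measure.measurable_rnDeriv _ _)]
    simp_rw [Measure.setLIntegral_rnDeriv (Measure.absolutelyContinuous_of_le (hle _))]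
    conv_rhs => rw [← h]
    simp
  rw [withDensity_eq_iff_of_sigmaFinite (by fun_prop) (by fun_prop)] at key
  have hf : ∀ᵐ x ∂μ, ∀ i, (ν i).rnDeriv μ x < ∞ :=
    ae_all_iff.2 fun i => Measure.rnDeriv_lt_top _ _
  filter_upwards [key, hf] with x hx hx'
  rw [← ENNReal.toReal_sum fun i _ => (hx' i).ne, hx]
  simp

/-- Pointwise entropy bound for a mixture of product densities. -/
lemma mixture_mul_log_le {w z l : ι → ℝ} (hw : ∀ i, 0 ≤ w i) (hw1 : ∑ i, w i = 1)
    (hz : ∀ i, 0 ≤ z i) (hz1 : ∀ i, z i ≤ 1) (hl : ∀ i, 0 ≤ l i) :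
    (∑ i, (l i)⁻¹ * (w i * z i)) * Real.log (∑ i, (l i)⁻¹ * (w i * z i)) ≤
      ∑ i, (l i)⁻¹ * Real.log (l i)⁻¹ * (w i * z i) := by
  have h := Real.convexOn_mul_log.map_sum_le (t := Finset.univ) (w := w)
    (p := fun i => (l i)⁻¹ * z i) (fun i _ => hw i) hw1
    (fun i _ => mul_nonneg (inv_nonneg.2 (hl i)) (hz i))
  have e : ∑ i, w i • ((l i)⁻¹ * z i) = ∑ i, (l i)⁻¹ * (w i * z i) :=
    Finset.sum_congr rfl fun i _ => by rw [smul_eq_mul]; ring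
  simp only [e] at h
  refine h.trans (Finset.sum_le_sum fun i _ => ?_)
  rw [smul_eq_mul]
  have hL := inv_nonneg.2 (hl i)
  rcases hL.eq_or_lt with h0 | h0
  · simp [← h0]
  rcases (hz i).eq_or_lt with h1 | h1
  · simp [← h1]
  have : Real.log ((l i)⁻¹ * z i) ≤ Real.log (l i)⁻¹ :=
    Real.log_le_log (by positivity) (by nlinarith [hz1 i])
  calc w i * ((l i)⁻¹ * z i * Real.log ((l i)⁻¹ * z i))
      ≤ w i * ((l i)⁻¹ * z i * Real.log (l i)⁻¹) := by
        have := hw i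
        gcongr
    _ = _ := by ring

/-- The Shannon entropy of a probability vector is at most the logarithm of its length. -/
lemma sum_mul_log_inv_le {l : ι → ℝ} (hl : ∀ i, 0 ≤ l i) (h1 : ∑ i, l i = 1) :
    ∑ i, l i * Real.log (l i)⁻¹ ≤ Real.log (Fintype.card ι) := by
  have hne : Nonempty ι := by
    by_contra h
    rw [not_nonempty_iff] at h
    simp at h1
  have hN : (0 : ℝ) < Fintype.card ι := by exact_mod_cast Fintype.card_pos
  have key : ∀ i, l i * Real.log (l i)⁻¹ ≤
      (Fintype.card ι : ℝ)⁻¹ - l i + l i * Real.log (Fintype.card ι) := fun i => by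
    rcases (hl i).eq_or_lt with h0 | h0
    · simp [← h0]
    have h := Real.log_le_sub_one_of_pos (x := (l i)⁻¹ * (Fintype.card ι : ℝ)⁻¹) (by positivity)
    rw [Real.log_mul (by positivity) (by positivity), Real.log_inv (Fintype.card ι : ℝ)] at h
    have h2 := mul_le_mul_of_nonneg_left h h0.le
    have h3 : l i * ((l i)⁻¹ * (Fintype.card ι : ℝ)⁻¹) = (Fintype.card ι : ℝ)⁻¹ := by
      field_simp
    linarith
  refine (Finset.sum_le_sum fun i _ => key i).trans (le_of_eq ?_)
  rw [Finset.sum_add_distrib, Finset.sum_sub_distrib, ← Finset.sum_mul, h1]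
  simp [hN.ne']

lemma blockMeasure_eq_withDensity (γ : ι → Measure (α × β)) [∀ i, IsFiniteMeasure (γ i)]
    {μ : Measure α} {ν : Measure β} [IsFiniteMeasure μ] [IsFiniteMeasure ν]
    (hμ : ∀ i, (γ i).fst ≪ μ) (hν : ∀ i, (γ i).snd ≪ ν) :
    blockMeasure γ = (μ.prod ν).withDensity (fun p => ∑ i, ENNReal.ofReal ((γ i).real univ)⁻¹ *
      ((γ i).fst.rnDeriv μ p.1 * (γ i).snd.rnDeriv ν p.2)) := by
  have h : ∀ i, (γ i).fst.prod (γ i).snd = (μ.prod ν).withDensity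
      (fun p => (γ i).fst.rnDeriv μ p.1 * (γ i).snd.rnDeriv ν p.2) := fun i => by
    rw [← prod_withDensity (Measure.measurable_rnDeriv _ _) (Measure.measurable_rnDeriv _ _),
      Measure.withDensity_rnDeriv_eq _ _ (hμ i), Measure.withDensity_rnDeriv_eq _ _ (hν i)]
  ext s hs
  rw [withDensity_apply _ hs, lintegral_finsetSum _ (fun i _ => by fun_prop), blockMeasure]
  simp only [Measure.coe_finsetSum, Finset.sum_apply, Measure.smul_apply, smul_eq_mul]
  refine Finset.sum_congr rfl fun i _ => ?_
  rw [lintegral_const_mul _ (by fun_prop), h, withDensity_apply _ hs]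

lemma Ent_blockMeasure_le (γ : ι → Measure (α × β)) {ρ : Measure (α × β)}
    [IsProbabilityMeasure ρ] (h : ∑ i, γ i = ρ) :
    Ent (blockMeasure γ) (ρ.fst.prod ρ.snd) ≤ ((Real.log (Fintype.card ι) : ℝ) : EReal) := by
  have hle : ∀ i, γ i ≤ ρ := fun i => by
    rw [← h]; exact Finset.single_le_sum (f := γ) (fun _ _ => Measure.zero_le _) (Finset.mem_univ i)
  have : ∀ i, IsFiniteMeasure (γ i) := fun i => isFiniteMeasure_of_le ρ (hle i)
  have hμ : ∀ i, (γ i).fst ≤ ρ.fst := fun i => Measure.fst_mono (hle i)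
  have hν : ∀ i, (γ i).snd ≤ ρ.snd := fun i => Measure.snd_mono (hle i)
  have hμ' := fun i => Measure.absolutelyContinuous_of_le (hμ i)
  have hν' := fun i => Measure.absolutelyContinuous_of_le (hν i)
  have hd := blockMeasure_eq_withDensity γ hμ' hν'
  set f : ι → α → ℝ := fun i x => ((γ i).fst.rnDeriv ρ.fst x).toReal with hf
  set k : ι → β → ℝ := fun i y => ((γ i).snd.rnDeriv ρ.snd y).toReal with hk
  set l : ι → ℝ := fun i => (γ i).real univ with hl
  set F : α × β → ℝ := fun p => ∑ i, (l i)⁻¹ * (f i p.1 * k i p.2) with hF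
  have hfm : ∀ i, Measurable (f i) := fun i => by fun_prop
  have hkm : ∀ i, Measurable (k i) := fun i => by fun_prop
  have hFm : Measurable F := by fun_prop
  have hl0 : ∀ i, 0 ≤ l i := fun i => measureReal_nonneg
  have hl1 : ∑ i, l i = 1 := by
    have : ρ.real univ = 1 := by simp
    rw [← this, ← h]
    simp [hl, measureReal_def, ENNReal.toReal_sum]
  have hf1 : ∀ᵐ x ∂ρ.fst, ∑ i, f i x = 1 := sum_rnDeriv_eq_one _ (by
    simp only [Measure.fst]; rw [← measure_map_finset_sum _ measurable_fst, h])
  have hfle : ∀ᵐ x ∂ρ.fst, ∀ i, (γ i).fst.rnDeriv ρ.fst x ≤ 1 :=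
    ae_all_iff.2 fun i => Measure.rnDeriv_le_one_of_le (hμ i)
  have hkle : ∀ᵐ y ∂ρ.snd, ∀ i, (γ i).snd.rnDeriv ρ.snd y ≤ 1 :=
    ae_all_iff.2 fun i => Measure.rnDeriv_le_one_of_le (hν i)
  have hae : ∀ᵐ p ∂(ρ.fst.prod ρ.snd), ∑ i, f i p.1 = 1 ∧
      (∀ i, (γ i).fst.rnDeriv ρ.fst p.1 ≤ 1) ∧ (∀ i, (γ i).snd.rnDeriv ρ.snd p.2 ≤ 1) := by
    filter_upwards [Measure.quasiMeasurePreserving_fst.ae hf1,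
      Measure.quasiMeasurePreserving_fst.ae hfle, Measure.quasiMeasurePreserving_snd.ae hkle]
      with p h1 h2 h3 using ⟨h1, h2, h3⟩
  have hrn : ∀ᵐ p ∂(ρ.fst.prod ρ.snd),
      ((blockMeasure γ).rnDeriv (ρ.fst.prod ρ.snd) p).toReal = F p := by
    rw [hd]
    filter_upwards [hae, Measure.rnDeriv_withDensity (ρ.fst.prod ρ.snd)
      (f := fun p => ∑ i, ENNReal.ofReal ((γ i).real univ)⁻¹ *
      ((γ i).fst.rnDeriv ρ.fst p.1 * (γ i).snd.rnDeriv ρ.snd p.2)) (by fun_prop)] with p hp hp'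
    rw [hp', ENNReal.toReal_sum fun i _ => ?_]
    · refine Finset.sum_congr rfl fun i _ => ?_
      rw [ENNReal.toReal_mul, ENNReal.toReal_mul,
        ENNReal.toReal_ofReal (inv_nonneg.2 measureReal_nonneg)]
    · exact ENNReal.mul_ne_top ENNReal.ofReal_ne_top (ENNReal.mul_ne_top
        ((hp.2.1 i).trans_lt ENNReal.one_lt_top).ne ((hp.2.2 i).trans_lt ENNReal.one_lt_top).ne)
  have hf0 : ∀ i x, 0 ≤ f i x := fun i x => ENNReal.toReal_nonneg
  have hk0 : ∀ i x, 0 ≤ k i x := fun i x => ENNReal.toReal_nonneg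
  have hF0 : ∀ p, 0 ≤ F p := fun p => Finset.sum_nonneg fun i _ =>
    mul_nonneg (inv_nonneg.2 (hl0 i)) (mul_nonneg (hf0 _ _) (hk0 _ _))
  have hle1 : ∀ {a : ℝ≥0∞}, a ≤ 1 → a.toReal ≤ 1 := fun ha => by
    simpa using ENNReal.toReal_mono ENNReal.one_ne_top ha
  have hpt : ∀ᵐ p ∂(ρ.fst.prod ρ.snd), F p * Real.log (F p) ≤
      ∑ i, (l i)⁻¹ * Real.log (l i)⁻¹ * (f i p.1 * k i p.2) := by
    filter_upwards [hae] with p hp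
    exact mixture_mul_log_le (fun i => hf0 i _) hp.1 (fun i => hk0 i _)
      (fun i => hle1 (hp.2.2 i)) hl0
  have hfi : ∀ i, Integrable (f i) ρ.fst := fun i => Measure.integrable_toReal_rnDeriv
  have hki : ∀ i, Integrable (k i) ρ.snd := fun i => Measure.integrable_toReal_rnDeriv
  have hprod : ∀ i, Integrable (fun p : α × β => f i p.1 * k i p.2) (ρ.fst.prod ρ.snd) :=
    fun i => (hfi i).mul_prod (hki i)
  have hF_int : Integrable (fun p => F p * Real.log (F p)) (ρ.fst.prod ρ.snd) := by
    obtain ⟨B, hB⟩ := (isCompact_Icc (a := (0 : ℝ)) (b := ∑ i, (l i)⁻¹)).exists_bound_of_continuousOn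
      Real.continuous_mul_log.continuousOn
    refine Integrable.of_bound (by fun_prop) B ?_
    filter_upwards [hae] with p hp
    refine hB _ ⟨hF0 p, Finset.sum_le_sum fun i _ => ?_⟩
    exact mul_le_of_le_one_right (inv_nonneg.2 (hl0 i)) (mul_le_one₀ (hle1 (hp.2.1 i)) (hk0 _ _)
      (hle1 (hp.2.2 i)))
  have hcongr : (fun p => ((blockMeasure γ).rnDeriv (ρ.fst.prod ρ.snd) p).toReal *
      Real.log ((blockMeasure γ).rnDeriv (ρ.fst.prod ρ.snd) p).toReal)
      =ᵐ[ρ.fst.prod ρ.snd] fun p => F p * Real.log (F p) := by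
    filter_upwards [hrn] with p hp
    rw [hp]
  have hac : blockMeasure γ ≪ ρ.fst.prod ρ.snd := by
    rw [hd]; exact withDensity_absolutelyContinuous _ _
  rw [Ent, if_pos ⟨hac, (integrable_congr hcongr).2 hF_int⟩, integral_congr_ae hcongr,
    EReal.coe_le_coe_iff]
  calc ∫ p, F p * Real.log (F p) ∂(ρ.fst.prod ρ.snd)
      ≤ ∫ p, ∑ i, (l i)⁻¹ * Real.log (l i)⁻¹ * (f i p.1 * k i p.2) ∂(ρ.fst.prod ρ.snd) :=
        integral_mono_ae hF_int (integrable_finsetSum _ fun i _ => (hprod i).const_mul _) hpt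
    _ = ∑ i, l i * Real.log (l i)⁻¹ := by
        rw [integral_finsetSum _ fun i _ => (hprod i).const_mul _]
        refine Finset.sum_congr rfl fun i _ => ?_
        rw [integral_const_mul, integral_prod_mul, Measure.integral_toReal_rnDeriv (hμ' i),
          Measure.integral_toReal_rnDeriv (hν' i)]
        have e1 : (γ i).fst.real univ = l i := by simp [hl, measureReal_def, Measure.fst_univ]
        have e2 : (γ i).snd.real univ = l i := by simp [hl, measureReal_def, Measure.snd_univ]
        rw [e1, e2]
        rcases eq_or_ne (l i) 0 with h0 | h0
        · simp [h0]
        · field_simp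
    _ ≤ _ := sum_mul_log_inv_le hl0 hl1

/-- If the `c`-exchange gain is at most `2 η` within each piece, then the block approximation
increases the transport cost by at most `η`. -/
lemma integral_blockMeasure_le (γ : ι → Measure (α × β)) {ρ : Measure (α × β)}
    [IsProbabilityMeasure ρ] (h : ∑ i, γ i = ρ) {c : α × β → ℝ} (hc : Measurable c) {B : ℝ}
    (hB : ∀ p, ‖c p‖ ≤ B) {η : ℝ}
    (hη : ∀ i, ∀ᵐ z ∂(γ i), ∀ᵐ w ∂(γ i), c (z.1, w.2) + c (w.1, z.2) - c z - c w ≤ 2 * η) :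
    ∫ p, c p ∂(blockMeasure γ) ≤ ∫ p, c p ∂ρ + η := by
  have hle : ∀ i, γ i ≤ ρ := fun i => by
    rw [← h]; exact Finset.single_le_sum (f := γ) (fun _ _ => Measure.zero_le _) (Finset.mem_univ i)
  have : ∀ i, IsFiniteMeasure (γ i) := fun i => isFiniteMeasure_of_le ρ (hle i)
  have hci : ∀ (m : Measure (α × β)) [IsFiniteMeasure m], Integrable c m := fun m _ =>
    Integrable.of_bound hc.aestronglyMeasurable B (ae_of_all _ hB)
  set l : ι → ℝ := fun i => (γ i).real univ with hl
  have hl0 : ∀ i, 0 ≤ l i := fun i => measureReal_nonneg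
  have hl1 : ∑ i, l i = 1 := by
    have : ρ.real univ = 1 := by simp
    rw [← this, ← h]
    simp [hl, measureReal_def, ENNReal.toReal_sum]
  have hblock : ∀ i, 2 * ∫ p, c p ∂((γ i).fst.prod (γ i).snd) ≤
      2 * (l i * ∫ p, c p ∂(γ i)) + 2 * η * (l i * l i) := fun i => by
    have hi : ∀ (g : (α × β) × (α × β) → α × β), Measurable g →
        Integrable (fun q => c (g q)) ((γ i).prod (γ i)) := fun g hg =>
      Integrable.of_bound (hc.comp hg).aestronglyMeasurable B (ae_of_all _ fun q => hB _)
    have e1 : ∫ q, c (q.1.1, q.2.2) ∂((γ i).prod (γ i)) =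
        ∫ p, c p ∂((γ i).fst.prod (γ i).snd) := by
      rw [Measure.fst, Measure.snd, Measure.map_prod_map _ _ measurable_fst measurable_snd,
        integral_map (by fun_prop) hc.aestronglyMeasurable]
      rfl
    have e2 : ∫ q, c (q.2.1, q.1.2) ∂((γ i).prod (γ i)) =
        ∫ p, c p ∂((γ i).fst.prod (γ i).snd) := by
      rw [← e1]
      exact integral_prod_swap (μ := γ i) (ν := γ i) (fun q => c (q.1.1, q.2.2))
    have e3 : ∫ q, c q.1 ∂((γ i).prod (γ i)) = l i * ∫ p, c p ∂(γ i) := by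
      rw [integral_fun_fst]; rfl
    have e4 : ∫ q, c q.2 ∂((γ i).prod (γ i)) = l i * ∫ p, c p ∂(γ i) := by
      rw [integral_fun_snd]; rfl
    have i1 := hi (fun q => (q.1.1, q.2.2)) (by fun_prop)
    have i2 := hi (fun q => (q.2.1, q.1.2)) (by fun_prop)
    have i3 := hi (fun q => q.1) (by fun_prop)
    have i4 := hi (fun q => q.2) (by fun_prop)
    have i12 : Integrable (fun q => c (q.1.1, q.2.2) + c (q.2.1, q.1.2)) ((γ i).prod (γ i)) :=
      i1.add i2
    have i123 : Integrable (fun q => c (q.1.1, q.2.2) + c (q.2.1, q.1.2) - c q.1)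
        ((γ i).prod (γ i)) := i12.sub i3
    have hset : MeasurableSet {q : (α × β) × (α × β) |
        c (q.1.1, q.2.2) + c (q.2.1, q.1.2) - c q.1 - c q.2 ≤ 2 * η} :=
      measurableSet_le (by fun_prop) measurable_const
    have hmono := integral_mono_ae (i123.sub i4)
      (integrable_const (2 * η) (μ := (γ i).prod (γ i)))
      ((Measure.ae_prod_iff_ae_ae hset).2 (hη i))
    simp only [Pi.sub_apply] at hmono
    rw [integral_sub i123 i4, integral_sub i12 i3, integral_add i1 i2, e1,
      e2, e3, e4, integral_const, smul_eq_mul, ← univ_prod_univ, measureReal_prod_prod] at hmono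
    change _ ≤ l i * l i * (2 * η) at hmono
    linarith
  have hterm : ∀ i, (l i)⁻¹ * ∫ p, c p ∂((γ i).fst.prod (γ i).snd) ≤
      ∫ p, c p ∂(γ i) + η * l i := fun i => by
    rcases (hl0 i).eq_or_lt with h0 | h0
    · have : γ i = 0 := by
        rw [← Measure.measure_univ_eq_zero]
        exact (measureReal_eq_zero_iff).1 h0.symm
      simp [this, ← h0]
    · rw [inv_mul_le_iff₀ h0]
      linarith [hblock i]
  have eρ : ∫ p, c p ∂ρ = ∑ i, ∫ p, c p ∂(γ i) := by
    rw [← h, integral_finsetSum_measure fun i _ => hci _]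
  have eb : ∫ p, c p ∂(blockMeasure γ) =
      ∑ i, (l i)⁻¹ * ∫ p, c p ∂((γ i).fst.prod (γ i).snd) := by
    rw [blockMeasure, integral_finsetSum_measure fun i _ =>
      (hci _).smul_measure ENNReal.ofReal_ne_top]
    refine Finset.sum_congr rfl fun i _ => ?_
    rw [integral_smul_measure, ENNReal.toReal_ofReal (inv_nonneg.2 (hl0 i)), smul_eq_mul]
  rw [eb, eρ]
  calc _ ≤ ∑ i, (∫ p, c p ∂(γ i) + η * l i) := Finset.sum_le_sum fun i _ => hterm i
    _ = _ := by rw [Finset.sum_add_distrib, ← Finset.mul_sum, hl1, mul_one]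

end Block

section Exchange

variable {E : Type*} [NormedAddCommGroup E] [InnerProductSpace ℝ E] [CompleteSpace E]

/-- The Riesz representative of the first partial derivative of a function on `E × E` with
derivative `g`. -/
def gradFst (g : E × E → (E × E) →L[ℝ] ℝ) (z : E × E) : E :=
  (InnerProductSpace.toDual ℝ E).symm ((g z).comp (ContinuousLinearMap.inl ℝ E E))

lemma inner_gradFst (g : E × E → (E × E) →L[ℝ] ℝ) (z : E × E) (v : E) :
    inner ℝ (gradFst g z) v = g z (v, 0) := by
  simp [gradFst, InnerProductSpace.toDual_symm_apply]

/-- Minty-type coordinate `(2 L + 1) x - ∂ₓ c (x, y)`. -/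
def mintyCoord (g : E × E → (E × E) →L[ℝ] ℝ) (L : ℝ) (z : E × E) : E :=
  (2 * L + 1) • z.1 - gradFst g z

lemma continuousOn_mintyCoord {g : E × E → (E × E) →L[ℝ] ℝ} {S : Set (E × E)}
    (hg : ContinuousOn g S) (L : ℝ) : ContinuousOn (mintyCoord g L) S := by
  unfold mintyCoord gradFst
  refine ContinuousOn.sub (by fun_prop) ?_
  exact (InnerProductSpace.toDual ℝ E).symm.continuous.comp_continuousOn
    (hg.clm_comp continuousOn_const)

lemma sub_le_inner_gradFst_add {c : E × E → ℝ} {g : E × E → (E × E) →L[ℝ] ℝ} {A B : Set E}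
    {L : ℝ≥0} (hdiff : ∀ p ∈ A ×ˢ B, HasFDerivAt c (g p) p) (hL : LipschitzOnWith L g (A ×ˢ B))
    {x x' y : E} (hx : segment ℝ x x' ⊆ A) (hy : y ∈ B) :
    c (x', y) - c (x, y) ≤ inner ℝ (gradFst g (x, y)) (x' - x) + L * ‖x' - x‖ ^ 2 := by
  have hseg : ∀ z ∈ segment ℝ (x, y) (x', y), z ∈ A ×ˢ B ∧ ‖z - (x, y)‖ ≤ ‖x' - x‖ := by
    intro z hz
    rw [segment_eq_image'] at hz
    obtain ⟨t, ht, rfl⟩ := hz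
    refine ⟨⟨hx ?_, by simpa using hy⟩, ?_⟩
    · rw [segment_eq_image']
      exact ⟨t, ht, by simp⟩
    · have : (x, y) + t • ((x', y) - (x, y)) - (x, y) = (t • (x' - x), 0) := by
        ext <;> simp
      simp only [this, Prod.norm_mk, norm_zero, norm_smul, Real.norm_eq_abs, abs_of_nonneg ht.1]
      exact max_le (mul_le_of_le_one_left (norm_nonneg _) ht.2) (norm_nonneg _)
  have h0 := (hseg _ (left_mem_segment ℝ _ _)).1
  have h := Convex.norm_image_sub_le_of_norm_hasFDerivWithin_le' (f := c) (f' := g)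
    (φ := g (x, y)) (C := L * ‖x' - x‖) (fun z hz => (hdiff z (hseg z hz).1).hasFDerivWithinAt)
    (fun z hz => (hL.norm_sub_le (hseg z hz).1 h0).trans (by
      have := (hseg z hz).2
      gcongr)) (convex_segment _ _) (left_mem_segment ℝ (x, y) (x', y))
    (right_mem_segment ℝ (x, y) (x', y))
  have e : ((x', y) - (x, y) : E × E) = (x' - x, 0) := by simp
  rw [e, Prod.norm_mk, norm_zero, max_eq_left (norm_nonneg _)] at h
  rw [inner_gradFst]
  have := (le_abs_self _).trans h
  linarith

/-- Exchanging the second coordinates of two points increases the cost by at most a quarter of the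
squared distance of their Minty-type coordinates. -/
lemma exchange_le {c : E × E → ℝ} {g : E × E → (E × E) →L[ℝ] ℝ} {A B : Set E}
    {L : ℝ≥0} (hdiff : ∀ p ∈ A ×ˢ B, HasFDerivAt c (g p) p) (hL : LipschitzOnWith L g (A ×ˢ B))
    {z w : E × E} (hx : segment ℝ z.1 w.1 ⊆ A) (hz : z.2 ∈ B) (hw : w.2 ∈ B) :
    c (z.1, w.2) + c (w.1, z.2) - c z - c w ≤ ‖mintyCoord g L z - mintyCoord g L w‖ ^ 2 / 4 := by
  have h1 := sub_le_inner_gradFst_add hdiff hL hx hz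
  have h2 := sub_le_inner_gradFst_add hdiff hL (segment_symm ℝ z.1 w.1 ▸ hx) hw
  set P := gradFst g z
  set Q := gradFst g w
  set a := z.1 - w.1 with ha
  have e1 : w.1 - z.1 = -a := by simp [ha]
  rw [e1, norm_neg, inner_neg_right] at h1
  set b := (2 * (L : ℝ)) • a - (P - Q) with hb
  have e2 : mintyCoord g L z - mintyCoord g L w = a + b := by
    simp only [mintyCoord, hb, ha]
    module
  have e3 : inner ℝ a b = 2 * L * ‖a‖ ^ 2 - (inner ℝ P a - inner ℝ Q a) := by
    rw [hb, inner_sub_right, inner_smul_right, real_inner_self_eq_norm_sq, inner_sub_right,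
      real_inner_comm a P, real_inner_comm a Q]
  have e4 := norm_add_sq_real a b
  have e5 := norm_sub_sq_real a b
  have e6 := sq_nonneg ‖a - b‖
  rw [e2]
  linarith

end Exchange

section Grid

/-- Index of the cell of a cubic grid with mesh `h` covering the ball of radius `R`. -/
def gridIndex {d : ℕ} (R h : ℝ) (u : EuclideanSpace ℝ (Fin d)) :
    Fin d → Fin (⌊2 * R / h⌋₊ + 1) :=
  fun i => Fin.ofNat _ ⌊(u i + R) / h⌋₊

lemma measurable_gridIndex {d : ℕ} (R h : ℝ) : Measurable (gridIndex (d := d) R h) := by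
  refine measurable_pi_lambda _ fun i => ?_
  exact (measurable_from_top (f := Fin.ofNat (⌊2 * R / h⌋₊ + 1))).comp
    (Nat.measurable_floor.comp (by fun_prop))

lemma norm_sub_sq_le_of_gridIndex_eq {d : ℕ} {R h : ℝ} (hh : 0 < h)
    {u v : EuclideanSpace ℝ (Fin d)} (hu : ‖u‖ ≤ R) (hv : ‖v‖ ≤ R)
    (huv : gridIndex R h u = gridIndex R h v) : ‖u - v‖ ^ 2 ≤ d * h ^ 2 := by
  have key : ∀ w : EuclideanSpace ℝ (Fin d), ‖w‖ ≤ R → ∀ i, 0 ≤ (w i + R) / h ∧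
      ((gridIndex R h w i : ℕ) = ⌊(w i + R) / h⌋₊) := by
    intro w hw i
    have h1 := abs_le.1 ((PiLp.norm_apply_le w i).trans hw)
    refine ⟨div_nonneg (by linarith) hh.le, ?_⟩
    simp only [gridIndex, Fin.val_ofNat]
    refine Nat.mod_eq_of_lt (Nat.lt_succ_of_le (Nat.floor_mono ?_))
    gcongr
    linarith
  rw [EuclideanSpace.norm_sq_eq]
  calc ∑ i, ‖(u - v) i‖ ^ 2 ≤ ∑ _i : Fin d, h ^ 2 := Finset.sum_le_sum fun i _ => ?_
    _ = d * h ^ 2 := by simp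
  obtain ⟨u0, u1⟩ := key u hu i
  obtain ⟨v0, v1⟩ := key v hv i
  rw [huv, v1] at u1
  have a1 := Nat.floor_le u0
  have a2 := Nat.lt_floor_add_one ((u i + R) / h)
  have b1 := Nat.floor_le v0
  have b2 := Nat.lt_floor_add_one ((v i + R) / h)
  rw [u1] at b1 b2
  have e : (u i + R) / h - (v i + R) / h = (u i - v i) / h := by ring
  have : |(u i - v i) / h| ≤ 1 := by
    rw [← e, abs_le]; constructor <;> linarith
  rw [abs_div, abs_of_pos hh, div_le_one hh] at this
  rw [PiLp.sub_apply, Real.norm_eq_abs]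
  gcongr

lemma log_card_grid_le {d : ℕ} {R ε : ℝ} (hR : 0 ≤ R) (hε : ε ∈ Set.Ioo (0 : ℝ) 1) :
    Real.log (Fintype.card (Fin d → Fin (⌊2 * R / √ε⌋₊ + 1))) ≤
      d / 2 * Real.log (1 / ε) + d * Real.log (2 * R + 1) := by
  have hs : 0 < √ε := Real.sqrt_pos.2 hε.1
  have hs1 : √ε ≤ 1 := Real.sqrt_le_one.2 hε.2.le
  have h1 : ((⌊2 * R / √ε⌋₊ + 1 : ℕ) : ℝ) ≤ (2 * R + 1) / √ε := by
    push_cast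
    rw [add_div]
    gcongr
    · exact Nat.floor_le (by positivity)
    · rwa [one_le_div hs]
  have h2 := Real.log_le_log (by positivity) h1
  rw [Real.log_div (by positivity) hs.ne', Real.log_sqrt hε.1.le] at h2
  rw [Fintype.card_fun, Fintype.card_fin, Fintype.card_fin, Nat.cast_pow, Real.log_pow, one_div,
    Real.log_inv]
  have h3 := mul_le_mul_of_nonneg_left h2 (Nat.cast_nonneg (α := ℝ) d)
  linarith

end Grid

lemma ae_mem_prod_of_marginals {α β : Type*} [MeasurableSpace α] [MeasurableSpace β]
    {ρ : Measure (α × β)} {A : Set α} {B : Set β} (hA : ρ.fst Aᶜ = 0) (hB : ρ.snd Bᶜ = 0) :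
    ∀ᵐ z ∂ρ, z ∈ A ×ˢ B := by
  have h1 : ∀ᵐ z ∂ρ, z.1 ∈ A := ae_of_ae_map measurable_fst.aemeasurable (mem_ae_iff.2 hA)
  have h2 : ∀ᵐ z ∂ρ, z.2 ∈ B := ae_of_ae_map measurable_snd.aemeasurable (mem_ae_iff.2 hB)
  filter_upwards [h1, h2] with z a b using ⟨a, b⟩

/-- A coupling can be approximated by one of small entropy, as soon as its support can be split
into finitely many pieces on which exchanging second coordinates does not gain much. -/
lemma exists_coupling_Ent_le {α β ι : Type*} [MeasurableSpace α] [MeasurableSpace β] [Fintype ι]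
    [MeasurableSpace ι] [MeasurableSingletonClass ι] {ρ : Measure (α × β)} [IsProbabilityMeasure ρ]
    {A : Set α} {B : Set β} (hA : ρ.fst Aᶜ = 0) (hB : ρ.snd Bᶜ = 0) {c : α × β → ℝ}
    (hc : Measurable ((A ×ˢ B).indicator c)) {b : ℝ} (hb : ∀ p ∈ A ×ˢ B, ‖c p‖ ≤ b)
    {κ : α × β → ι} (hκ : Measurable κ) {η : ℝ}
    (hη : ∀ z ∈ A ×ˢ B, ∀ w ∈ A ×ˢ B, κ z = κ w →
      c (z.1, w.2) + c (w.1, z.2) - c z - c w ≤ 2 * η) :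
    ∃ σ : Measure (α × β), IsProbabilityMeasure σ ∧ σ.fst = ρ.fst ∧ σ.snd = ρ.snd ∧
      Ent σ (ρ.fst.prod ρ.snd) ≤ ((Real.log (Fintype.card ι) : ℝ) : EReal) ∧
      ∫ p, c p ∂σ ≤ ∫ p, c p ∂ρ + η := by
  have hsum : ∑ i, ρ.restrict (κ ⁻¹' {i}) = ρ := by
    ext s hs
    simp only [Measure.coe_finsetSum, Finset.sum_apply]
    rw [← tsum_fintype (L := .unconditional _), ← Measure.sum_apply _ hs,
      ← Measure.restrict_iUnion (fun i j hij => ?_) fun i => hκ (measurableSet_singleton i)]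
    · rw [← preimage_iUnion, iUnion_of_singleton, preimage_univ, Measure.restrict_univ]
    · exact Disjoint.preimage _ (by simpa using hij)
  set γ : ι → Measure (α × β) := fun i => ρ.restrict (κ ⁻¹' {i}) with hγ
  have hfst : (blockMeasure γ).fst = ρ.fst := by rw [blockMeasure_fst, hsum]
  have hsnd : (blockMeasure γ).snd = ρ.snd := by rw [blockMeasure_snd, hsum]
  have hprob : IsProbabilityMeasure (blockMeasure γ) := ⟨by
    rw [← Measure.fst_univ, hfst, Measure.fst_univ, measure_univ]⟩
  refine ⟨blockMeasure γ, hprob, hfst, hsnd, Ent_blockMeasure_le γ hsum, ?_⟩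
  have hind : ∀ (m : Measure (α × β)), m.fst = ρ.fst → m.snd = ρ.snd →
      ∫ p, c p ∂m = ∫ p, (A ×ˢ B).indicator c p ∂m := fun m h1 h2 => by
    refine integral_congr_ae ?_
    filter_upwards [ae_mem_prod_of_marginals (h1 ▸ hA) (h2 ▸ hB)] with p hp
    rw [indicator_of_mem hp]
  rw [hind _ hfst hsnd, hind ρ rfl rfl]
  refine integral_blockMeasure_le γ hsum hc (B := max b 0) (fun p => ?_) fun i => ?_
  · by_cases hp : p ∈ A ×ˢ B
    · rw [indicator_of_mem hp]; exact (hb p hp).trans (le_max_left _ _)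
    · rw [indicator_of_notMem hp, norm_zero]; exact le_max_right _ _
  · have hae : ∀ᵐ z ∂(γ i), z ∈ A ×ˢ B ∧ κ z = i := by
      filter_upwards [ae_restrict_of_ae (ae_mem_prod_of_marginals hA hB),
        ae_restrict_mem (hκ (measurableSet_singleton i))] with z h1 h2 using ⟨h1, h2⟩
    filter_upwards [hae] with z hz
    filter_upwards [hae] with w hw
    rw [indicator_of_mem hz.1, indicator_of_mem hw.1,
      indicator_of_mem (show (z.1, w.2) ∈ A ×ˢ B from ⟨hz.1.1, hw.1.2⟩),
      indicator_of_mem (show (w.1, z.2) ∈ A ×ˢ B from ⟨hw.1.1, hz.1.2⟩)]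
    exact hη z hz.1 w hw.1 (hz.2.trans hw.2.symm)

/-- A compact subset of a convex set `Ω` lies, with all segments between its points, in a
compact subset of `Ω`. -/
lemma exists_isCompact_segment_subset {E : Type*} [NormedAddCommGroup E] [NormedSpace ℝ E]
    {K Ω : Set E} (hK : IsCompact K) (hΩ : Convex ℝ Ω) (hKΩ : K ⊆ Ω) :
    ∃ A, IsCompact A ∧ A ⊆ Ω ∧ ∀ x ∈ K, ∀ y ∈ K, segment ℝ x y ⊆ A := by
  refine ⟨(fun p : ℝ × E × E => p.2.1 + p.1 • (p.2.2 - p.2.1)) '' (Icc (0 : ℝ) 1 ×ˢ K ×ˢ K),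
    (isCompact_Icc.prod (hK.prod hK)).image (by fun_prop), ?_, fun x hx y hy => ?_⟩
  · rintro _ ⟨⟨t, x, y⟩, ⟨ht, hx, hy⟩, rfl⟩
    refine hΩ.segment_subset (hKΩ hx) (hKΩ hy) ?_
    rw [segment_eq_image']
    exact ⟨t, ht, rfl⟩
  · rw [segment_eq_image']
    rintro _ ⟨t, ht, rfl⟩
    exact ⟨(t, x, y), ⟨ht, hx, hy⟩, rfl⟩

/-- Upper bound for `C^{1,1}_loc` costs and `L^∞` marginals:
`v_ε ≤ v₀ + (d/2) ε log(1/ε) + M ε` on `(0,1)`. -/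
theorem entCost_upper_bound_C11 {d : ℕ}
    (Ωm Ωp : Set (EuclideanSpace ℝ (Fin d)))
    (hΩmo : IsOpen Ωm) (hΩpo : IsOpen Ωp) (hΩmc : Convex ℝ Ωm) (hΩpc : Convex ℝ Ωp)
    (μm μp : Measure (EuclideanSpace ℝ (Fin d)))
    [IsProbabilityMeasure μm] [IsProbabilityMeasure μp]
    (hsm : ∃ K, IsCompact K ∧ K ⊆ Ωm ∧ μm Kᶜ = 0)
    (hsp : ∃ K, IsCompact K ∧ K ⊆ Ωp ∧ μp Kᶜ = 0)
    (hacm : μm ≪ volume) (hacp : μp ≪ volume)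
    (hbdm : ∃ C : ℝ≥0∞, C ≠ ⊤ ∧ ∀ᵐ x ∂volume, μm.rnDeriv volume x ≤ C)
    (hbdp : ∃ C : ℝ≥0∞, C ≠ ⊤ ∧ ∀ᵐ x ∂volume, μp.rnDeriv volume x ≤ C)
    (c : EuclideanSpace ℝ (Fin d) × EuclideanSpace ℝ (Fin d) → ℝ)
    (g : EuclideanSpace ℝ (Fin d) × EuclideanSpace ℝ (Fin d) →
      (EuclideanSpace ℝ (Fin d) × EuclideanSpace ℝ (Fin d)) →L[ℝ] ℝ)
    (hdiff : ∀ p ∈ Ωm ×ˢ Ωp, HasFDerivAt c (g p) p)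
    (hlip : ∀ p ∈ Ωm ×ˢ Ωp, ∃ K : ℝ≥0, ∃ t ∈ nhdsWithin p (Ωm ×ˢ Ωp), LipschitzOnWith K g t) :
    ∃ M : ℝ, 0 ≤ M ∧ ∀ ε ∈ Set.Ioo (0 : ℝ) 1,
      entCost μm μp c ε ≤ entCost μm μp c 0
        + (((d : ℝ) / 2 * ε * Real.log (1 / ε) + M * ε : ℝ) : EReal) := by
  obtain ⟨Km, hKm, hKmΩ, hKm0⟩ := hsm
  obtain ⟨Kp, hKp, hKpΩ, hKp0⟩ := hsp
  obtain ⟨A, hA, hAΩ, hseg⟩ := exists_isCompact_segment_subset hKm hΩmc hKmΩ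
  have hsub : A ×ˢ Kp ⊆ Ωm ×ˢ Ωp := prod_mono hAΩ hKpΩ
  have hKA : Km ⊆ A := fun x hx => hseg x hx x hx (left_mem_segment ℝ x x)
  have hKsub : Km ×ˢ Kp ⊆ A ×ˢ Kp := prod_mono hKA Subset.rfl
  have hdiff' : ∀ p ∈ A ×ˢ Kp, HasFDerivAt c (g p) p := fun p hp => hdiff p (hsub hp)
  have hloc : LocallyLipschitzOn (A ×ˢ Kp) g := fun p hp => by
    obtain ⟨L, t, ht, hL⟩ := hlip p (hsub hp)
    exact ⟨L, t, nhdsWithin_mono p hsub ht, hL⟩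
  obtain ⟨L, hL⟩ := hloc.exists_lipschitzOnWith_of_compact (hA.prod hKp)
  have hcpt : IsCompact (Km ×ˢ Kp) := hKm.prod hKp
  have hKmeas : MeasurableSet (Km ×ˢ Kp) := hKm.measurableSet.prod hKp.measurableSet
  have hcc : ContinuousOn c (Km ×ˢ Kp) := fun p hp =>
    (hdiff' p (hKsub hp)).continuousAt.continuousWithinAt
  obtain ⟨b, hb⟩ := hcpt.exists_bound_of_continuousOn hcc
  have huc : ContinuousOn (mintyCoord g L) (Km ×ˢ Kp) :=
    continuousOn_mintyCoord (hL.continuousOn.mono hKsub) L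
  obtain ⟨R', hR'⟩ := hcpt.exists_bound_of_continuousOn huc
  set R := max R' 0 with hRdef
  have hR0 : 0 ≤ R := le_max_right _ _
  have hcm : Measurable ((Km ×ˢ Kp).indicator c) := by
    rw [← piecewise_eq_indicator]
    exact hcc.measurable_piecewise continuousOn_const hKmeas
  have hum : Measurable ((Km ×ˢ Kp).piecewise (mintyCoord g L) 0) :=
    huc.measurable_piecewise continuousOn_const hKmeas
  refine ⟨d * Real.log (2 * R + 1) + d / 8, ?_, fun ε hε => ?_⟩
  · have := Real.log_nonneg (x := 2 * R + 1) (by linarith)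
    positivity
  rw [← EReal.sub_le_iff_le_add (.inl (EReal.coe_ne_bot _)) (.inl (EReal.coe_ne_top _))]
  refine le_sInf ?_
  rintro _ ⟨ρ, hρ, hρm, hρp, rfl⟩
  rw [EReal.coe_zero, zero_mul, add_zero,
    EReal.sub_le_iff_le_add (.inl (EReal.coe_ne_bot _)) (.inl (EReal.coe_ne_top _))]
  subst hρm hρp
  have hs : 0 < √ε := Real.sqrt_pos.2 hε.1
  obtain ⟨σ, hσ, hσm, hσp, hent, hcost⟩ := exists_coupling_Ent_le hKm0 hKp0 hcm hb ((measurable_gridIndex R √ε).comp hum) (η := d * ε / 8)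
    (fun z hz w hw hzw => by
      simp only [Function.comp_apply, piecewise_eq_of_mem _ _ _ hz,
        piecewise_eq_of_mem _ _ _ hw] at hzw
      have h1 := exchange_le hdiff' hL (hseg _ hz.1 _ hw.1) hz.2 hw.2
      have h2 := norm_sub_sq_le_of_gridIndex_eq hs ((hR' z hz).trans (le_max_left _ _))
        ((hR' w hw).trans (le_max_left _ _)) hzw
      rw [Real.sq_sqrt hε.1.le] at h2
      linarith)
  calc entCost ρ.fst ρ.snd c ε
      ≤ ((∫ p, c p ∂σ : ℝ) : EReal) + (ε : EReal) * Ent σ (ρ.fst.prod ρ.snd) :=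
        sInf_le ⟨σ, hσ, hσm, hσp, rfl⟩
    _ ≤ ((∫ p, c p ∂ρ + d * ε / 8 : ℝ) : EReal) + (ε : EReal) *
        ((d / 2 * Real.log (1 / ε) + d * Real.log (2 * R + 1) : ℝ) : EReal) := by
        refine add_le_add (EReal.coe_le_coe_iff.2 hcost) (mul_le_mul_of_nonneg_left
          (hent.trans (EReal.coe_le_coe_iff.2 (log_card_grid_le hR0 hε)))
          (EReal.coe_nonneg.2 hε.1.le))
    _ = _ := by
        rw [← EReal.coe_mul, ← EReal.coe_add, ← EReal.coe_add]
        congr 1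
        ring
end
end

section
/- Let Ω⁻, Ω⁺ ⊆ ℝ^d be open convex sets, let c ∈ C²(Ω⁻ × Ω⁺) be an infinitesimally twisted cost, and let μ⁻, μ⁺ be probability measures compactly supported in Ω⁻, Ω⁺ with densities in L^∞ with respect to Lebesgue measure. Then there exists a constant m ≥ 0 such that for every ε > 0: v_ε ≥ v_0 + (d/2)·ε·log(1/ε) − m·ε. -/
open MeasureTheory Real Set Filter Classical
open scoped ENNReal NNReal Topology

noncomputable section

/-- The cross second derivative matrix `∇²ₓᵧ c(x,y) = (∂²c/∂xᵢ∂yⱼ)ᵢⱼ`. -/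
def crossDeriv {d : ℕ} (c : EuclideanSpace ℝ (Fin d) × EuclideanSpace ℝ (Fin d) → ℝ)
    (x y : EuclideanSpace ℝ (Fin d)) : Matrix (Fin d) (Fin d) ℝ :=
  Matrix.of fun i j =>
    fderiv ℝ (fun y' => fderiv ℝ (fun x' => c (x', y')) x (EuclideanSpace.single i 1)) y
      (EuclideanSpace.single j 1)

section Duality

variable {X Y : Type*} [TopologicalSpace X] [TopologicalSpace Y] [MeasurableSpace X]
  [MeasurableSpace Y]

/-- The values of the dual problem of optimal transport with majorising potentials. -/
def majorantValues (μ : Measure X) (ν : Measure Y) (f : C(X × Y, ℝ)) : Set ℝ :=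
  {v | ∃ (φ : C(X, ℝ)) (ψ : C(Y, ℝ)), (∀ x y, f (x, y) ≤ φ x + ψ y) ∧
    v = ∫ x, φ x ∂μ + ∫ y, ψ y ∂ν}

variable [CompactSpace X] [CompactSpace Y] (μ : Measure X) (ν : Measure Y)

lemma majorantValues_nonempty (f : C(X × Y, ℝ)) : (majorantValues μ ν f).Nonempty :=
  ⟨_, ContinuousMap.const X ‖f‖, 0, fun x y => by
    simpa using (le_abs_self _).trans (f.norm_coe_le_norm (x, y)), rfl⟩

variable [BorelSpace X] [BorelSpace Y]

variable {μ} in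
lemma integrable_continuousMap [IsFiniteMeasure μ] (φ : C(X, ℝ)) : Integrable φ μ :=
  φ.continuous.integrable_of_hasCompactSupport (HasCompactSupport.of_compactSpace φ)

variable [IsProbabilityMeasure μ] [IsProbabilityMeasure ν]

lemma le_of_mem_majorantValues {f : C(X × Y, ℝ)} {a v : ℝ} (ha : ∀ z, a ≤ f z)
    (hv : v ∈ majorantValues μ ν f) : a ≤ v := by
  obtain ⟨φ, ψ, h, rfl⟩ := hv
  have hφ := integrable_continuousMap (μ := μ) φ
  have hψ := integrable_continuousMap (μ := ν) ψ
  have h1 : ∀ x, a - ∫ y, ψ y ∂ν ≤ φ x := fun x => by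
    have h2 : ∫ _, (a - φ x) ∂ν ≤ ∫ y, ψ y ∂ν :=
      integral_mono (integrable_const _) hψ fun y => by
        linarith [h x y, ha (x, y)]
    simp at h2
    linarith
  have h3 : ∫ _, (a - ∫ y, ψ y ∂ν) ∂μ ≤ ∫ x, φ x ∂μ :=
    integral_mono (integrable_const _) hφ h1
  simp at h3
  linarith

lemma bddBelow_majorantValues (f : C(X × Y, ℝ)) : BddBelow (majorantValues μ ν f) :=
  ⟨-‖f‖, fun _ hv => le_of_mem_majorantValues μ ν (fun z => neg_le_of_abs_le
    (f.norm_coe_le_norm z)) hv⟩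

lemma sInf_majorantValues_smul {t : ℝ} (ht : 0 < t) (f : C(X × Y, ℝ)) :
    sInf (majorantValues μ ν (t • f)) = t * sInf (majorantValues μ ν f) := by
  have key : ∀ {t : ℝ}, 0 < t → ∀ f : C(X × Y, ℝ),
      sInf (majorantValues μ ν (t • f)) ≤ t * sInf (majorantValues μ ν f) := by
    intro t ht f
    rw [← div_le_iff₀' ht]
    refine le_csInf (majorantValues_nonempty μ ν f) ?_
    rintro _ ⟨φ, ψ, h, rfl⟩
    rw [div_le_iff₀' ht]
    refine csInf_le (bddBelow_majorantValues μ ν _) ⟨t • φ, t • ψ, fun x y => ?_, ?_⟩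
    · simpa [mul_add] using mul_le_mul_of_nonneg_left (h x y) ht.le
    · simp [integral_const_mul, mul_add]
  refine le_antisymm (key ht f) ?_
  have h := key (inv_pos.2 ht) (t • f)
  rw [smul_smul, inv_mul_cancel₀ ht.ne', one_smul, ← div_eq_inv_mul, le_div_iff₀' ht] at h
  exact h

lemma sInf_majorantValues_add_le (f g : C(X × Y, ℝ)) :
    sInf (majorantValues μ ν (f + g)) ≤
      sInf (majorantValues μ ν f) + sInf (majorantValues μ ν g) := by
  rw [← sub_le_iff_le_add]
  refine le_csInf (majorantValues_nonempty μ ν f) ?_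
  rintro _ ⟨φ, ψ, h, rfl⟩
  rw [sub_le_iff_le_add, ← sub_le_iff_le_add']
  refine le_csInf (majorantValues_nonempty μ ν g) ?_
  rintro _ ⟨φ', ψ', h', rfl⟩
  rw [sub_le_iff_le_add']
  refine csInf_le (bddBelow_majorantValues μ ν _) ⟨φ + φ', ψ + ψ', fun x y => ?_, ?_⟩
  · have := h x y
    have := h' x y
    simp only [ContinuousMap.add_apply]
    linarith
  · simp only [ContinuousMap.add_apply]
    rw [integral_add (integrable_continuousMap φ) (integrable_continuousMap φ'),
      integral_add (integrable_continuousMap ψ) (integrable_continuousMap ψ')]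
    ring

lemma sInf_majorantValues_zero : sInf (majorantValues μ ν 0) = 0 :=
  le_antisymm (csInf_le (bddBelow_majorantValues μ ν _) ⟨0, 0, by simp, by simp⟩)
    (le_csInf (majorantValues_nonempty μ ν 0) fun _ hv =>
      le_of_mem_majorantValues μ ν (fun z => by simp) hv)

lemma exists_linear_le_sInf_majorantValues (g : C(X × Y, ℝ)) :
    ∃ L : C(X × Y, ℝ) →ₗ[ℝ] ℝ, L g = sInf (majorantValues μ ν g) ∧
      ∀ f, L f ≤ sInf (majorantValues μ ν f) := by
  by_cases hg : g = 0
  · subst hg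
    obtain ⟨L, -, hL⟩ := exists_extension_of_le_sublinear (⊥ : C(X × Y, ℝ) →ₗ.[ℝ] ℝ)
      (fun f => sInf (majorantValues μ ν f)) (fun t ht f => sInf_majorantValues_smul μ ν ht f)
      (sInf_majorantValues_add_le μ ν) (by
        rintro ⟨x, hx⟩
        obtain rfl : x = 0 := (Submodule.mem_bot ℝ).1 hx
        rw [show (⟨0, hx⟩ : (⊥ : C(X × Y, ℝ) →ₗ.[ℝ] ℝ).domain) = 0 from rfl]
        simp [sInf_majorantValues_zero])
    exact ⟨L, by simp [sInf_majorantValues_zero], hL⟩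
  · obtain ⟨L, hL1, hL⟩ := exists_extension_of_le_sublinear
      (LinearPMap.mkSpanSingleton (K := ℝ) (σ := RingHom.id ℝ) g (sInf (majorantValues μ ν g)) hg)
      (fun f => sInf (majorantValues μ ν f)) (fun t ht f => sInf_majorantValues_smul μ ν ht f)
      (sInf_majorantValues_add_le μ ν) (by
        rintro ⟨x, hx⟩
        obtain ⟨t, rfl⟩ := Submodule.mem_span_singleton.1 hx
        rw [LinearPMap.mkSpanSingleton'_apply]
        simp only [RingHom.id_apply, smul_eq_mul]
        rcases lt_trichotomy t 0 with ht | rfl | ht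
        · have h := sInf_majorantValues_add_le μ ν (t • g) ((-t) • g)
          rw [← add_smul, add_neg_cancel, zero_smul, sInf_majorantValues_zero,
            sInf_majorantValues_smul μ ν (neg_pos.2 ht)] at h
          linarith
        · simp [sInf_majorantValues_zero]
        · rw [sInf_majorantValues_smul μ ν ht])
    refine ⟨L, ?_, hL⟩
    have := hL1 ⟨g, Submodule.mem_span_singleton_self g⟩
    rw [this]
    exact LinearPMap.mkSpanSingleton_apply ℝ ℝ hg _

open CompactlySupportedContinuousMap in
/-- A linear functional on `C(Z)`, `Z` compact, which is nonpositive on nonpositive functions is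
the integral against a finite measure. -/
lemma exists_measure_of_linear_nonpos {Z : Type*} [TopologicalSpace Z] [CompactSpace Z] [T2Space Z]
    [MeasurableSpace Z] [BorelSpace Z] (L : C(Z, ℝ) →ₗ[ℝ] ℝ)
    (hL : ∀ f : C(Z, ℝ), (∀ z, f z ≤ 0) → L f ≤ 0) :
    ∃ γ : Measure Z, IsFiniteMeasure γ ∧ ∀ f : C(Z, ℝ), ∫ z, f z ∂γ = L f := by
  let Λ₀ : CompactlySupportedContinuousMap Z ℝ →ₗ[ℝ] ℝ :=
    { toFun := fun f => L f.toContinuousMap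
      map_add' := fun f g => L.map_add f.toContinuousMap g.toContinuousMap
      map_smul' := fun t f => L.map_smul t f.toContinuousMap }
  let Λ := PositiveLinearMap.mk₀ Λ₀ (fun f hf => by
    have h := hL (-f.toContinuousMap) (fun z => by simpa using hf z)
    rw [map_neg] at h
    exact neg_nonpos.1 h)
  refine ⟨RealRMK.rieszMeasure Λ, ?_, fun f => ?_⟩
  · infer_instance
  · exact RealRMK.integral_rieszMeasure Λ (continuousMapEquiv f)

/-- **Kantorovich duality** on compact spaces: there is an optimal coupling whose cost is
approximated by that of continuous potentials. -/
theorem exists_coupling_forall_exists_potentials [T2Space X] [T2Space Y]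
    [SecondCountableTopology X] [SecondCountableTopology Y]
    [HasOuterApproxClosed X] [HasOuterApproxClosed Y] (c : C(X × Y, ℝ)) :
    ∃ γ : Measure (X × Y), IsProbabilityMeasure γ ∧ γ.fst = μ ∧ γ.snd = ν ∧ ∀ δ > 0,
      ∃ (φ : C(X, ℝ)) (ψ : C(Y, ℝ)), (∀ x y, φ x + ψ y ≤ c (x, y)) ∧
        ∫ z, c z ∂γ ≤ ∫ x, φ x ∂μ + ∫ y, ψ y ∂ν + δ := by
  obtain ⟨L, hLc, hL⟩ := exists_linear_le_sInf_majorantValues μ ν (-c)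
  have hL' : ∀ (φ : C(X, ℝ)) (ψ : C(Y, ℝ)) (f : C(X × Y, ℝ)), (∀ x y, f (x, y) ≤ φ x + ψ y) →
      L f ≤ ∫ x, φ x ∂μ + ∫ y, ψ y ∂ν := fun φ ψ f h =>
    (hL f).trans (csInf_le (bddBelow_majorantValues μ ν _) ⟨φ, ψ, h, rfl⟩)
  obtain ⟨γ, hγ, hγL⟩ := exists_measure_of_linear_nonpos L (fun f hf => by
    simpa using hL' 0 0 f (by simpa using hf))
  have hfst : γ.fst = μ := by
    refine ext_of_forall_integral_eq_of_IsFiniteMeasure fun f => ?_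
    rw [Measure.fst, integral_map (by fun_prop) (f.continuous.aestronglyMeasurable)]
    have h1 := hγL (f.toContinuousMap.comp ContinuousMap.fst)
    have h2 := hL' f.toContinuousMap 0 (f.toContinuousMap.comp ContinuousMap.fst) (by simp)
    have h3 := hL' (-f.toContinuousMap) 0 (-(f.toContinuousMap.comp ContinuousMap.fst)) (by simp)
    rw [map_neg] at h3
    simp [integral_neg] at h1 h2 h3
    linarith
  have hsnd : γ.snd = ν := by
    refine ext_of_forall_integral_eq_of_IsFiniteMeasure fun f => ?_
    rw [Measure.snd, integral_map (by fun_prop) (f.continuous.aestronglyMeasurable)]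
    have h1 := hγL (f.toContinuousMap.comp ContinuousMap.snd)
    have h2 := hL' 0 f.toContinuousMap (f.toContinuousMap.comp ContinuousMap.snd) (by simp)
    have h3 := hL' 0 (-f.toContinuousMap) (-(f.toContinuousMap.comp ContinuousMap.snd)) (by simp)
    rw [map_neg] at h3
    simp [integral_neg] at h1 h2 h3
    linarith
  refine ⟨γ, ⟨?_⟩, hfst, hsnd, fun δ hδ => ?_⟩
  · rw [← Measure.fst_univ, hfst, measure_univ]
  · obtain ⟨_, ⟨φ, ψ, h, rfl⟩, hlt⟩ := exists_lt_of_csInf_lt (majorantValues_nonempty μ ν (-c))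
      (lt_add_of_pos_right (sInf (majorantValues μ ν (-c))) hδ)
    refine ⟨-φ, -ψ, fun x y => ?_, ?_⟩
    · have := h x y
      simp at this ⊢
      linarith
    · rw [hγL]
      rw [← hLc, map_neg] at hlt
      simp only [ContinuousMap.neg_apply, integral_neg]
      linarith

end Duality

section Twist

/-- The cross difference of a `C²` cost is, near a point, the bilinear form given by the mixed
second derivative, up to a small multiple of the product of the increments. -/
lemma exists_ball_crossDiff_approx {E F : Type*} [NormedAddCommGroup E] [NormedSpace ℝ E]
    [NormedAddCommGroup F] [NormedSpace ℝ F] {c : E × F → ℝ} {p : E × F}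
    (hc : ContDiffAt ℝ 2 c p) {η : ℝ} (hη : 0 < η) :
    ∃ r > 0, ∀ x ∈ Metric.ball p.1 r, ∀ x' ∈ Metric.ball p.1 r, ∀ y ∈ Metric.ball p.2 r,
      ∀ y' ∈ Metric.ball p.2 r,
      |c (x, y) - c (x, y') - c (x', y) + c (x', y')
        - fderiv ℝ (fderiv ℝ c) p (0, y - y') (x - x', 0)| ≤ η * ‖y - y'‖ * ‖x - x'‖ := by
  have hD : ContDiffAt ℝ 1 (fderiv ℝ c) p := hc.fderiv_right (by norm_num)
  have hs := (hD.hasStrictFDerivAt one_ne_zero).isLittleO.def hη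
  have hdiff : ∀ᶠ q in 𝓝 p, DifferentiableAt ℝ c q := by
    filter_upwards [hc.eventually (by simp)] with q hq using hq.differentiableAt (by norm_num)
  obtain ⟨r, hr, h⟩ := Metric.eventually_nhds_iff_ball.1 (hs.and
    (hdiff.prod_inl_nhds p))
  refine ⟨r, hr, fun x hx x' hx' y hy y' hy' => ?_⟩
  have hmem : ∀ u ∈ Metric.ball p.1 r, ∀ v ∈ Metric.ball p.2 r, (u, v) ∈ Metric.ball p r :=
    fun u hu v hv => by
      rw [← ball_prod_same]; exact ⟨hu, hv⟩
  have hd : ∀ u ∈ Metric.ball p.1 r, ∀ v ∈ Metric.ball p.2 r, DifferentiableAt ℝ c (u, v) :=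
    fun u hu v hv => (h ((u, v), p) (by
      rw [← ball_prod_same]; exact ⟨hmem u hu v hv, Metric.mem_ball_self hr⟩)).2
  have hder : ∀ u ∈ Metric.ball p.1 r, ∀ v ∈ Metric.ball p.2 r,
      HasFDerivAt (fun u => c (u, v)) ((fderiv ℝ c (u, v)).comp (ContinuousLinearMap.inl ℝ E F)) u :=
    fun u hu v hv => (hd u hu v hv).hasFDerivAt.comp u (hasFDerivAt_prodMk_left u v)
  have key := (convex_ball p.1 r).norm_image_sub_le_of_norm_hasFDerivWithin_le
    (f := fun u => c (u, y) - c (u, y') -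
      ((fderiv ℝ (fderiv ℝ c) p (0, y - y')).comp (ContinuousLinearMap.inl ℝ E F)) u)
    (C := η * ‖y - y'‖)
    (fun u hu => (((hder u hu y hy).sub (hder u hu y' hy')).sub
      (ContinuousLinearMap.hasFDerivAt _)).hasFDerivWithinAt)
    (fun u hu => ?_) hx' hx
  · refine le_trans (le_of_eq ?_) key
    rw [Real.norm_eq_abs]
    congr 1
    have : ((x - x', 0) : E × F) = (x, 0) - (x', 0) := by simp
    rw [this, map_sub]
    simp
    ring
  · have h1 := (h ((u, y), (u, y')) (by
      rw [← ball_prod_same]; exact ⟨hmem u hu y hy, hmem u hu y' hy'⟩)).1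
    simp only [Prod.mk_sub_mk, sub_self] at h1
    rw [← ContinuousLinearMap.sub_comp, ← ContinuousLinearMap.sub_comp]
    refine (ContinuousLinearMap.opNorm_comp_le _ _).trans ?_
    have h2 := ContinuousLinearMap.norm_inl_le_one ℝ E F
    have h3 : ‖((0 : E), y - y')‖ = ‖y - y'‖ := by simp [Prod.norm_def]
    rw [h3] at h1
    exact (mul_le_of_le_one_right (norm_nonneg _) h2).trans h1

variable {d : ℕ}

lemma crossDeriv_apply_eq {c : EuclideanSpace ℝ (Fin d) × EuclideanSpace ℝ (Fin d) → ℝ}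
    {x y : EuclideanSpace ℝ (Fin d)} (hc : ContDiffAt ℝ 2 c (x, y)) (i j : Fin d) :
    crossDeriv c x y i j = fderiv ℝ (fderiv ℝ c) (x, y) (0, EuclideanSpace.single j 1)
      (EuclideanSpace.single i 1, 0) := by
  have hD : ContDiffAt ℝ 1 (fderiv ℝ c) (x, y) := hc.fderiv_right (by norm_num)
  have hD' := (hD.differentiableAt one_ne_zero).hasFDerivAt
  have hdiff : ∀ᶠ q in 𝓝 (x, y), DifferentiableAt ℝ c q := by
    filter_upwards [hc.eventually (by simp)] with q hq using hq.differentiableAt (by norm_num)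
  have hev : (fun y' => fderiv ℝ (fun x' => c (x', y')) x (EuclideanSpace.single i 1)) =ᶠ[𝓝 y]
      fun y' => fderiv ℝ c (x, y') (EuclideanSpace.single i 1, 0) := by
    have : ∀ᶠ y' in 𝓝 y, DifferentiableAt ℝ c (x, y') :=
      (Continuous.prodMk_right x).continuousAt.eventually hdiff
    filter_upwards [this] with y' hy'
    have h : HasFDerivAt (fun x' => c (x', y')) _ x :=
      hy'.hasFDerivAt.comp x (hasFDerivAt_prodMk_left x y')
    rw [h.fderiv]
    simp
  have hder : HasFDerivAt (fun y' => fderiv ℝ c (x, y') (EuclideanSpace.single i 1, 0)) _ y :=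
    ((hD'.comp y (hasFDerivAt_prodMk_right x y)).clm_apply (hasFDerivAt_const _ y))
  rw [crossDeriv, Matrix.of_apply, hev.fderiv_eq, hder.fderiv]
  simp

/-- Nondegeneracy of the mixed second derivative of an infinitesimally twisted cost. -/
lemma exists_linear_crossDeriv {c : EuclideanSpace ℝ (Fin d) × EuclideanSpace ℝ (Fin d) → ℝ}
    {x y : EuclideanSpace ℝ (Fin d)} (hc : ContDiffAt ℝ 2 c (x, y))
    (hdet : (crossDeriv c x y).det ≠ 0) :
    ∃ (A : EuclideanSpace ℝ (Fin d) →L[ℝ] EuclideanSpace ℝ (Fin d)) (κ : ℝ), 0 < κ ∧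
      (∀ h, κ * ‖h‖ ≤ ‖A h‖) ∧
      ∀ h k, inner ℝ (A h) k = fderiv ℝ (fderiv ℝ c) (x, y) (0, h) (k, 0) := by
  let E := EuclideanSpace ℝ (Fin d)
  let B : E →L[ℝ] E →L[ℝ] ℝ :=
    ((ContinuousLinearMap.compL ℝ E (E × E) ℝ).flip (ContinuousLinearMap.inl ℝ E E)).comp
      ((fderiv ℝ (fderiv ℝ c) (x, y)).comp (ContinuousLinearMap.inr ℝ E E))
  have hB : ∀ h k, B h k = fderiv ℝ (fderiv ℝ c) (x, y) (0, h) (k, 0) := fun h k => by simp [B]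
  let A : E →L[ℝ] E := LinearMap.toContinuousLinearMap
    { toFun := fun h => (InnerProductSpace.toDual ℝ E).symm (B h)
      map_add' := fun h h' => by simp
      map_smul' := fun t h => by simp }
  have hA : ∀ h k, inner ℝ (A h) k = B h k := fun h k =>
    InnerProductSpace.toDual_symm_apply
  have hker : LinearMap.ker (A : E →ₗ[ℝ] E) = ⊥ := by
    rw [LinearMap.ker_eq_bot']
    intro h hh
    have hh' : A h = 0 := hh
    have : (crossDeriv c x y).mulVec h = 0 := by
      funext i
      have h1 : B h (EuclideanSpace.single i 1) = 0 := by rw [← hA, hh', inner_zero_left]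
      have h2 : h = ∑ j, h j • EuclideanSpace.single j (1 : ℝ) := by
        simpa using ((EuclideanSpace.basisFun (Fin d) ℝ).sum_repr h).symm
      rw [h2, map_sum, sum_apply] at h1
      simp only [map_smul, smul_apply, smul_eq_mul, hB] at h1
      rw [Matrix.mulVec, dotProduct, Pi.zero_apply, ← h1]
      exact Finset.sum_congr rfl fun j _ => by rw [crossDeriv_apply_eq hc, mul_comm]
    have h0 := Matrix.eq_zero_of_mulVec_eq_zero hdet this
    ext i
    exact congrFun h0 i
  obtain ⟨K, hK, hKA⟩ := LinearMap.exists_antilipschitzWith (A : E →ₗ[ℝ] E) hker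
  refine ⟨A, (K : ℝ)⁻¹, by positivity, fun h => ?_, fun h k => by rw [hA, hB]⟩
  rw [inv_mul_le_iff₀ (by positivity)]
  simpa [edist_dist, dist_eq_norm] using hKA.le_mul_dist h 0

end Twist

section Integral

variable {E : Type*} [NormedAddCommGroup E] [InnerProductSpace ℝ E] [FiniteDimensional ℝ E]
  [MeasurableSpace E] [BorelSpace E]

lemma lintegral_exp_neg_mul_norm_sub_sq {b : ℝ} (hb : 0 < b) (y₀ : E) :
    ∫⁻ y : E, ENNReal.ofReal (exp (-b * ‖y - y₀‖ ^ 2)) =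
      ENNReal.ofReal ((π / b) ^ ((Module.finrank ℝ E : ℝ) / 2)) := by
  rw [lintegral_sub_right_eq_self (fun y => ENNReal.ofReal (exp (-b * ‖y‖ ^ 2))) y₀,
    ← GaussianFourier.integral_rexp_neg_mul_sq_norm hb, ofReal_integral_eq_lintegral_ofReal]
  · have hpos : (π / b) ^ ((Module.finrank ℝ E : ℝ) / 2) ≠ 0 := by positivity
    rw [← GaussianFourier.integral_rexp_neg_mul_sq_norm hb] at hpos
    exact not_imp_comm.1 integral_undef hpos
  · exact ae_of_all _ fun _ => (exp_pos _).le

/-- A nonnegative function whose sublevel sets at height `t` have diameter `O(√t)` has a Laplace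
integral of Gaussian size. -/
lemma lintegral_indicator_exp_neg_div_le {S : Set E} {G : E → ℝ} {κ ε : ℝ} (hκ : 0 < κ)
    (hε : 0 < ε) (hG : ∀ y ∈ S, 0 ≤ G y)
    (h : ∀ y ∈ S, ∀ y' ∈ S, κ * ‖y - y'‖ ^ 2 ≤ G y + G y') :
    ∫⁻ y, S.indicator (fun y => ENNReal.ofReal (exp (-G y / ε))) y ≤
      ENNReal.ofReal (exp (1 / 2) * (2 * π / κ) ^ ((Module.finrank ℝ E : ℝ) / 2)) *
        ENNReal.ofReal (ε ^ ((Module.finrank ℝ E : ℝ) / 2)) := by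
  rcases S.eq_empty_or_nonempty with rfl | hS
  · simp
  obtain ⟨_, ⟨y₀, hy₀, rfl⟩, hlt⟩ := exists_lt_of_csInf_lt (hS.image G)
    (lt_add_of_pos_right (sInf (G '' S)) hε)
  have hmin : ∀ y ∈ S, G y₀ ≤ G y + ε := fun y hy => by
    have : sInf (G '' S) ≤ G y :=
      csInf_le ⟨0, by rintro _ ⟨z, hz, rfl⟩; exact hG z hz⟩ ⟨y, hy, rfl⟩
    linarith
  have hb : 0 < κ / (2 * ε) := by positivity
  calc ∫⁻ y, S.indicator (fun y => ENNReal.ofReal (exp (-G y / ε))) y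
      ≤ ∫⁻ y, ENNReal.ofReal (exp (1 / 2)) *
          ENNReal.ofReal (exp (-(κ / (2 * ε)) * ‖y - y₀‖ ^ 2)) := by
        refine lintegral_mono (indicator_le fun y hy => ?_)
        rw [← ENNReal.ofReal_mul (exp_pos _).le, ← exp_add]
        refine ENNReal.ofReal_le_ofReal (exp_le_exp.2 ?_)
        have h1 := h y hy y₀ hy₀
        have h2 := hmin y hy
        rw [div_le_iff₀ hε]
        have h3 : (1 / 2 + -(κ / (2 * ε)) * ‖y - y₀‖ ^ 2) * ε =
            ε / 2 - κ * ‖y - y₀‖ ^ 2 / 2 := by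
          field_simp
          ring
        linarith
    _ = _ := by
        rw [lintegral_const_mul' _ _ ENNReal.ofReal_ne_top, lintegral_exp_neg_mul_norm_sub_sq hb,
          ← ENNReal.ofReal_mul (exp_pos _).le, ← ENNReal.ofReal_mul (by positivity), mul_assoc,
          ← mul_rpow (by positivity) hε.le]
        congr 4
        field_simp

lemma lintegral_prod_shear {f : E × E → ℝ≥0∞} (hf : Measurable f) (A : E →L[ℝ] E) :
    ∫⁻ p, f p = ∫⁻ w, ∫⁻ y, f (w + A y, y) := by
  have hA := A.continuous.measurable
  have hm : Measurable (fun z : E × E => f (z.2 + A z.1, z.1)) :=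
    hf.comp ((measurable_snd.add (hA.comp measurable_fst)).prodMk measurable_fst)
  calc ∫⁻ p, f p = ∫⁻ y, ∫⁻ x, f (x, y) := by
        rw [Measure.volume_eq_prod, lintegral_prod_symm _ hf.aemeasurable]
    _ = ∫⁻ y, ∫⁻ w, f (w + A y, y) :=
        lintegral_congr fun y => (lintegral_add_right_eq_self (fun x => f (x, y)) (A y)).symm
    _ = _ := lintegral_lintegral_swap hm.aemeasurable

/-- The key local estimate: near a point where the cross difference of `D` is, up to a small error,
a nondegenerate bilinear form, the Laplace integral of `D ≥ 0` is controlled. -/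
lemma setLIntegral_ball_exp_neg_div_le {K K' : Set E} {D : E × E → ℝ} {p : E × E} {r κ ε : ℝ}
    {A : E →L[ℝ] E} (hK : MeasurableSet (K ×ˢ K')) (hD : ContinuousOn D (K ×ˢ K'))
    (hD0 : ∀ q ∈ K ×ˢ K', 0 ≤ D q) (hκ : 0 < κ) (hε : 0 < ε) (hA : ∀ h, κ * ‖h‖ ≤ ‖A h‖)
    (hcross : ∀ x ∈ Metric.ball p.1 r ∩ K, ∀ x' ∈ Metric.ball p.1 r ∩ K,
      ∀ y ∈ Metric.ball p.2 r ∩ K', ∀ y' ∈ Metric.ball p.2 r ∩ K',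
      |D (x, y) - D (x, y') - D (x', y) + D (x', y') - inner ℝ (A (y - y')) (x - x')|
        ≤ κ / 2 * ‖y - y'‖ * ‖x - x'‖) :
    ∫⁻ q in Metric.ball p.1 r ×ˢ Metric.ball p.2 r,
        (K ×ˢ K').indicator (fun q => ENNReal.ofReal (exp (-D q / ε))) q ≤
      volume (Metric.ball (0 : E) (‖p.1‖ + r + ‖A‖ * (‖p.2‖ + r))) *
        ENNReal.ofReal (exp (1 / 2) * (2 * π / (κ ^ 2 / 2)) ^ ((Module.finrank ℝ E : ℝ) / 2)) *
        ENNReal.ofReal (ε ^ ((Module.finrank ℝ E : ℝ) / 2)) := by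
  have hball : MeasurableSet (Metric.ball p.1 r ×ˢ Metric.ball p.2 r) :=
    measurableSet_ball.prod measurableSet_ball
  have hF : Measurable
      ((K ×ˢ K').indicator (fun q => ENNReal.ofReal (exp (-D q / ε)))) := by
    rw [← piecewise_eq_indicator]
    exact ContinuousOn.measurable_piecewise
      (ENNReal.continuous_ofReal.comp_continuousOn (hD.neg.div_const ε).rexp) continuousOn_const hK
  rw [← lintegral_indicator hball, lintegral_prod_shear (hF.indicator hball) A,
    indicator_indicator, mul_assoc, mul_comm, ← setLIntegral_const,
    ← lintegral_indicator measurableSet_ball]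
  refine lintegral_mono fun w => ?_
  set T := Metric.ball p.1 r ×ˢ Metric.ball p.2 r ∩ K ×ˢ K' with hT
  have hind : ∀ y, T.indicator (fun q => ENNReal.ofReal (exp (-D q / ε))) (w + A y, y) =
      {y | (w + A y, y) ∈ T}.indicator
        (fun y => ENNReal.ofReal (exp (-D (w + A y, y) / ε))) y := fun y => rfl
  simp only [hind]
  by_cases hw : w ∈ Metric.ball (0 : E) (‖p.1‖ + r + ‖A‖ * (‖p.2‖ + r))
  · rw [indicator_of_mem hw]
    refine lintegral_indicator_exp_neg_div_le (by positivity) hε (fun y hy => hD0 _ hy.2)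
      fun y hy y' hy' => ?_
    have h1 := (abs_le.1 (hcross _ ⟨hy.1.1, hy.2.1⟩ _ ⟨hy'.1.1, hy'.2.1⟩ _ ⟨hy.1.2, hy.2.2⟩ _
      ⟨hy'.1.2, hy'.2.2⟩)).1
    have h2 := hD0 (w + A y, y') ⟨hy.2.1, hy'.2.2⟩
    have h3 := hD0 (w + A y', y) ⟨hy'.2.1, hy.2.2⟩
    have h4 : w + A y - (w + A y') = A (y - y') := by rw [map_sub]; abel
    simp only [h4, real_inner_self_eq_norm_sq] at h1
    have h5 := hA (y - y')
    have h6 : 0 ≤ κ * ‖y - y'‖ := by positivity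
    nlinarith [mul_le_mul h5 h5 h6 (norm_nonneg _),
      mul_le_mul_of_nonneg_right h5 (norm_nonneg (A (y - y')))]
  · rw [indicator_of_notMem hw]
    refine le_of_eq ?_
    have hempty : {y | (w + A y, y) ∈ T} = ∅ := by
      refine eq_empty_of_forall_notMem fun y hy => hw ?_
      have h1 : ‖w + A y - p.1‖ < r := by simpa [dist_eq_norm] using hy.1.1
      have h2 : ‖y - p.2‖ < r := by simpa [dist_eq_norm] using hy.1.2
      rw [mem_ball_zero_iff]
      have h3 : ‖y‖ ≤ ‖p.2‖ + r := by
        have := norm_add_le (y - p.2) p.2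
        rw [sub_add_cancel] at this
        linarith
      have h4 : ‖A y‖ ≤ ‖A‖ * (‖p.2‖ + r) :=
        (A.le_opNorm y).trans (mul_le_mul_of_nonneg_left h3 (norm_nonneg _))
      have h5 : w = (w + A y - p.1) + p.1 - A y := by abel
      have h6 := norm_sub_le ((w + A y - p.1) + p.1) (A y)
      have h7 := norm_add_le (w + A y - p.1) p.1
      rw [← h5] at h6
      linarith
    simp [hempty]

end Integral

section Entropy

/-- The Gibbs variational inequality. -/
lemma neg_log_le_integral_add_integral_rnDeriv_mul_log {α : Type*} [MeasurableSpace α]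
    {γ q : Measure α} [IsProbabilityMeasure γ] [IsProbabilityMeasure q] (hγ : γ ≪ q)
    (hint : Integrable (fun x => (γ.rnDeriv q x).toReal * log (γ.rnDeriv q x).toReal) q)
    {D : α → ℝ} (hD : Integrable D γ) (hDm : AEMeasurable D q) {B : ℝ} (hB : 0 < B)
    (hle : ∫⁻ x, ENNReal.ofReal (exp (-D x)) ∂q ≤ ENNReal.ofReal B) :
    -log B ≤ ∫ x, D x ∂γ + ∫ x, (γ.rnDeriv q x).toReal * log (γ.rnDeriv q x).toReal ∂q := by
  set ρ : α → ℝ := fun x => (γ.rnDeriv q x).toReal with hρ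
  have hexpm : AEStronglyMeasurable (fun x => exp (-D x)) q :=
    (measurable_exp.comp_aemeasurable hDm.neg).aestronglyMeasurable
  have hexp0 : 0 ≤ᵐ[q] fun x => exp (-D x) := ae_of_all _ fun _ => (exp_pos _).le
  have hexp : Integrable (fun x => exp (-D x)) q :=
    ⟨hexpm, (hasFiniteIntegral_iff_ofReal hexp0).2 (hle.trans_lt ENNReal.ofReal_lt_top)⟩
  have hexp_le : ∫ x, exp (-D x) ∂q ≤ B := by
    rw [integral_eq_lintegral_of_nonneg_ae hexp0 hexpm]
    exact ENNReal.toReal_le_of_le_ofReal hB.le hle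
  have hρi : Integrable ρ q := Measure.integrable_toReal_rnDeriv
  have hρ1 : ∫ x, ρ x ∂q = 1 := by
    rw [hρ, Measure.integral_toReal_rnDeriv hγ]; simp
  have hρD : Integrable (fun x => ρ x * D x) q := (integrable_rnDeriv_smul_iff hγ).2 hD
  have hρD' : ∫ x, ρ x * D x ∂q = ∫ x, D x ∂γ := integral_rnDeriv_smul hγ
  have hpt : ∀ x, ρ x - exp (-D x) / B ≤ ρ x * D x + ρ x * log B + ρ x * log (ρ x) := fun x => by
    have h0 : 0 ≤ ρ x := ENNReal.toReal_nonneg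
    rcases h0.eq_or_lt with h | h
    · rw [← h]
      have : 0 ≤ exp (-D x) / B := by positivity
      simpa using this
    · have h1 := log_le_sub_one_of_pos (show 0 < exp (-D x) / B / ρ x by positivity)
      rw [log_div (by positivity) h.ne', log_div (exp_pos _).ne' hB.ne', log_exp] at h1
      have h2 := mul_le_mul_of_nonneg_left h1 h0
      have h3 : ρ x * (exp (-D x) / B / ρ x - 1) = exp (-D x) / B - ρ x := by
        field_simp
      rw [h3] at h2
      linarith
  have hρB : Integrable (fun x => ρ x * D x + ρ x * log B) q := hρD.add (hρi.mul_const _)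
  have h := integral_mono (hρi.sub (hexp.div_const B)) (hρB.add hint) hpt
  simp only [Pi.add_apply, Pi.sub_apply] at h
  rw [integral_sub hρi (hexp.div_const B), integral_add hρB hint,
    integral_add hρD (hρi.mul_const _), integral_div, integral_mul_const, hρ1, hρD'] at h
  have h4 : (∫ x, exp (-D x) ∂q) / B ≤ 1 := (div_le_one hB).2 hexp_le
  linarith

end Entropy

section LowerBound

variable {d : ℕ}

lemma exists_setLIntegral_exp_neg_div_le
    {c : EuclideanSpace ℝ (Fin d) × EuclideanSpace ℝ (Fin d) → ℝ}
    {K K' : Set (EuclideanSpace ℝ (Fin d))} (hK : IsCompact K) (hK' : IsCompact K')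
    (hc : ∀ p ∈ K ×ˢ K', ContDiffAt ℝ 2 c p)
    (htwist : ∀ x ∈ K, ∀ y ∈ K', (crossDeriv c x y).det ≠ 0) :
    ∃ C : ℝ≥0∞, C ≠ ∞ ∧ ∀ φ ψ : C(EuclideanSpace ℝ (Fin d), ℝ),
      (∀ x ∈ K, ∀ y ∈ K', φ x + ψ y ≤ c (x, y)) → ∀ ε > 0,
      ∫⁻ q in K ×ˢ K', (K ×ˢ K').indicator
        (fun q => ENNReal.ofReal (exp (-(c q - φ q.1 - ψ q.2) / ε))) q ≤
          C * ENNReal.ofReal (ε ^ ((d : ℝ) / 2)) := by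
  refine (hK.prod hK').induction_on (p := fun t => ∃ C : ℝ≥0∞, C ≠ ∞ ∧
    ∀ φ ψ : C(EuclideanSpace ℝ (Fin d), ℝ),
      (∀ x ∈ K, ∀ y ∈ K', φ x + ψ y ≤ c (x, y)) → ∀ ε > 0,
      ∫⁻ q in t, (K ×ˢ K').indicator
        (fun q => ENNReal.ofReal (exp (-(c q - φ q.1 - ψ q.2) / ε))) q ≤
          C * ENNReal.ofReal (ε ^ ((d : ℝ) / 2))) ?_ ?_ ?_ ?_
  · exact ⟨0, by simp, by simp⟩
  · rintro s t hst ⟨C, hC, h⟩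
    exact ⟨C, hC, fun φ ψ hφψ ε hε => (lintegral_mono_set hst).trans (h φ ψ hφψ ε hε)⟩
  · rintro s t ⟨C, hC, h⟩ ⟨C', hC', h'⟩
    refine ⟨C + C', by simp [hC, hC'], fun φ ψ hφψ ε hε => ?_⟩
    rw [add_mul]
    exact (lintegral_union_le _ _ _).trans (add_le_add (h φ ψ hφψ ε hε) (h' φ ψ hφψ ε hε))
  · rintro p hp
    obtain ⟨A, κ, hκ, hA, hAc⟩ :=
      exists_linear_crossDeriv (hc p hp) (htwist p.1 hp.1 p.2 hp.2)
    obtain ⟨r, hr, hcross⟩ := exists_ball_crossDiff_approx (hc p hp) (half_pos hκ)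
    refine ⟨Metric.ball p.1 r ×ˢ Metric.ball p.2 r, mem_nhdsWithin_of_mem_nhds
      (prod_mem_nhds (Metric.ball_mem_nhds _ hr) (Metric.ball_mem_nhds _ hr)),
      volume (Metric.ball (0 : EuclideanSpace ℝ (Fin d)) (‖p.1‖ + r + ‖A‖ * (‖p.2‖ + r))) *
        ENNReal.ofReal (exp (1 / 2) * (2 * π / (κ ^ 2 / 2)) ^ ((d : ℝ) / 2)),
      ENNReal.mul_ne_top measure_ball_lt_top.ne ENNReal.ofReal_ne_top, fun φ ψ hφψ ε hε => ?_⟩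
    have hcont : ContinuousOn c (K ×ˢ K') := fun q hq => (hc q hq).continuousAt.continuousWithinAt
    have := setLIntegral_ball_exp_neg_div_le (p := p) (r := r)
      (D := fun q => c q - φ q.1 - ψ q.2) (hK.measurableSet.prod hK'.measurableSet)
      (by fun_prop) (fun q hq => by linarith [hφψ q.1 hq.1 q.2 hq.2]) hκ hε hA
      (fun x hx x' hx' y hy y' hy' => by
        have := hcross x hx.1 x' hx'.1 y hy.1 y' hy'.1
        rw [hAc]
        convert this using 2
        ring)
    rwa [finrank_euclideanSpace_fin] at this

lemma measure_le_smul_of_rnDeriv_le {α : Type*} [MeasurableSpace α] {μ ν : Measure α}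
    [μ.HaveLebesgueDecomposition ν] (hμ : μ ≪ ν) {C : ℝ≥0∞}
    (h : ∀ᵐ x ∂ν, μ.rnDeriv ν x ≤ C) : μ ≤ C • ν := by
  rw [← Measure.withDensity_rnDeriv_eq μ ν hμ, ← withDensity_const]
  exact withDensity_mono h

lemma exists_lintegral_prod_exp_neg_div_le
    {c : EuclideanSpace ℝ (Fin d) × EuclideanSpace ℝ (Fin d) → ℝ}
    {K K' : Set (EuclideanSpace ℝ (Fin d))} (hK : IsCompact K) (hK' : IsCompact K')
    (hc : ∀ p ∈ K ×ˢ K', ContDiffAt ℝ 2 c p)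
    (htwist : ∀ x ∈ K, ∀ y ∈ K', (crossDeriv c x y).det ≠ 0)
    {μ ν : Measure (EuclideanSpace ℝ (Fin d))} [SFinite μ] [SFinite ν]
    (hμK : μ Kᶜ = 0) (hνK : ν K'ᶜ = 0)
    {M N : ℝ≥0∞} (hM : M ≠ ∞) (hN : N ≠ ∞) (hμ : μ ≤ M • volume) (hν : ν ≤ N • volume) :
    ∃ C : ℝ, 0 < C ∧ ∀ φ ψ : C(EuclideanSpace ℝ (Fin d), ℝ),
      (∀ x ∈ K, ∀ y ∈ K', φ x + ψ y ≤ c (x, y)) → ∀ ε > 0,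
      ∫⁻ q, ENNReal.ofReal (exp (-((c q - φ q.1 - ψ q.2) / ε))) ∂(μ.prod ν) ≤
        ENNReal.ofReal (C * ε ^ ((d : ℝ) / 2)) := by
  obtain ⟨C, hC, h⟩ := exists_setLIntegral_exp_neg_div_le hK hK' hc htwist
  have hKK' : MeasurableSet (K ×ˢ K') := hK.measurableSet.prod hK'.measurableSet
  have hMNC : M * N * C ≠ ∞ := ENNReal.mul_ne_top (ENNReal.mul_ne_top hM hN) hC
  have hres : (μ.prod ν).restrict (K ×ˢ K') = μ.prod ν := by
    rw [← Measure.prod_restrict, Measure.restrict_eq_self_of_ae_mem (mem_ae_iff.2 hμK),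
      Measure.restrict_eq_self_of_ae_mem (mem_ae_iff.2 hνK)]
  have hprod : μ.prod ν ≤ (M * N) • volume := by
    refine (Measure.prod_mono hμ hν).trans (le_of_eq ?_)
    rw [Measure.prod_smul_left, Measure.prod_smul_right, smul_smul, Measure.volume_eq_prod]
  refine ⟨(M * N * C).toReal + 1, by positivity, fun φ ψ hφψ ε hε => ?_⟩
  calc ∫⁻ q, ENNReal.ofReal (exp (-((c q - φ q.1 - ψ q.2) / ε))) ∂(μ.prod ν)
      = ∫⁻ q in K ×ˢ K', (K ×ˢ K').indicator
          (fun q => ENNReal.ofReal (exp (-(c q - φ q.1 - ψ q.2) / ε))) q ∂(μ.prod ν) := by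
        conv_lhs => rw [← hres]
        refine setLIntegral_congr_fun hKK' fun q hq => ?_
        simp only [indicator_of_mem hq, neg_div]
    _ ≤ ∫⁻ q in K ×ˢ K', (K ×ˢ K').indicator
          (fun q => ENNReal.ofReal (exp (-(c q - φ q.1 - ψ q.2) / ε))) q ∂((M * N) • volume) :=
        lintegral_mono' (Measure.restrict_mono_measure hprod _) le_rfl
    _ ≤ M * N * (C * ENNReal.ofReal (ε ^ ((d : ℝ) / 2))) := by
        rw [Measure.restrict_smul, lintegral_smul_measure, smul_eq_mul]
        gcongr
        exact h φ ψ hφψ ε hε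
    _ ≤ _ := by
        rw [← mul_assoc, ENNReal.ofReal_mul (by positivity)]
        gcongr
        exact (ENNReal.ofReal_toReal hMNC).symm.le.trans (ENNReal.ofReal_le_ofReal (by simp))

/-- Kantorovich duality for measures concentrated on compact subsets of a metric space. -/
lemma exists_coupling_forall_exists_potentials_of_compact {X Y : Type*} [MetricSpace X]
    [MetricSpace Y] [MeasurableSpace X] [MeasurableSpace Y] [BorelSpace X] [BorelSpace Y]
    [SecondCountableTopology X] [SecondCountableTopology Y] {μ : Measure X} {ν : Measure Y}
    [IsProbabilityMeasure μ] [IsProbabilityMeasure ν] {K : Set X} {K' : Set Y}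
    (hK : IsCompact K) (hK' : IsCompact K') (hμK : μ Kᶜ = 0) (hνK : ν K'ᶜ = 0)
    {c : X × Y → ℝ} (hc : ContinuousOn c (K ×ˢ K')) :
    ∃ γ : Measure (X × Y), IsProbabilityMeasure γ ∧ γ.fst = μ ∧ γ.snd = ν ∧ ∀ δ > 0,
      ∃ (φ : C(X, ℝ)) (ψ : C(Y, ℝ)), (∀ x ∈ K, ∀ y ∈ K', φ x + ψ y ≤ c (x, y)) ∧
        ∫ z, c z ∂γ ≤ ∫ x, φ x ∂μ + ∫ y, ψ y ∂ν + δ := by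
  have := isCompact_iff_compactSpace.1 hK
  have := isCompact_iff_compactSpace.1 hK'
  have hμ : (μ.comap ((↑) : K → X)).map (↑) = μ := by
    rw [map_comap_subtype_coe hK.measurableSet,
      Measure.restrict_eq_self_of_ae_mem (mem_ae_iff.2 hμK)]
  have hν : (ν.comap ((↑) : K' → Y)).map (↑) = ν := by
    rw [map_comap_subtype_coe hK'.measurableSet,
      Measure.restrict_eq_self_of_ae_mem (mem_ae_iff.2 hνK)]
  have hμp : IsProbabilityMeasure (μ.comap ((↑) : K → X)) :=
    ⟨by rw [← preimage_univ (f := ((↑) : K → X)), ← Measure.map_apply measurable_subtype_coe .univ,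
      hμ, measure_univ]⟩
  have hνp : IsProbabilityMeasure (ν.comap ((↑) : K' → Y)) :=
    ⟨by rw [← preimage_univ (f := ((↑) : K' → Y)), ← Measure.map_apply measurable_subtype_coe .univ,
      hν, measure_univ]⟩
  let ι : K × K' → X × Y := Prod.map (↑) (↑)
  have hι : MeasurableEmbedding ι :=
    (MeasurableEmbedding.subtype_coe hK.measurableSet).prodMap
      (MeasurableEmbedding.subtype_coe hK'.measurableSet)
  have hιc : Continuous (fun z => c (ι z)) :=
    hc.comp_continuous (continuous_subtype_val.prodMap continuous_subtype_val)
      fun z => ⟨z.1.2, z.2.2⟩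
  obtain ⟨γ, hγ, hfst, hsnd, h⟩ := exists_coupling_forall_exists_potentials
    (μ.comap ((↑) : K → X)) (ν.comap ((↑) : K' → Y)) ⟨_, hιc⟩
  refine ⟨γ.map ι, Measure.isProbabilityMeasure_map hι.measurable.aemeasurable, ?_, ?_,
    fun δ hδ => ?_⟩
  · rw [← hμ, ← hfst, Measure.fst, Measure.fst, Measure.map_map measurable_fst hι.measurable,
      Measure.map_map measurable_subtype_coe measurable_fst]
    rfl
  · rw [← hν, ← hsnd, Measure.snd, Measure.snd, Measure.map_map measurable_snd hι.measurable,
      Measure.map_map measurable_subtype_coe measurable_snd]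
    rfl
  · obtain ⟨φ, ψ, hle, hint⟩ := h δ hδ
    obtain ⟨φ', hφ'⟩ := φ.exists_restrict_eq hK.isClosed
    obtain ⟨ψ', hψ'⟩ := ψ.exists_restrict_eq hK'.isClosed
    subst hφ' hψ'
    refine ⟨φ', ψ', fun x hx y hy => hle ⟨x, hx⟩ ⟨y, hy⟩, ?_⟩
    rw [hι.integral_map, ← hμ, ← hν,
      (MeasurableEmbedding.subtype_coe hK.measurableSet).integral_map,
      (MeasurableEmbedding.subtype_coe hK'.measurableSet).integral_map]
    exact hint

lemma ae_mem_prod_of_fst_snd {α β : Type*} [MeasurableSpace α] [MeasurableSpace β]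
    {γ : Measure (α × β)} {K : Set α} {K' : Set β} (hK : MeasurableSet K) (hK' : MeasurableSet K')
    (h : γ.fst Kᶜ = 0) (h' : γ.snd K'ᶜ = 0) : ∀ᵐ z ∂γ, z ∈ K ×ˢ K' := by
  rw [Measure.fst_apply hK.compl] at h
  rw [Measure.snd_apply hK'.compl] at h'
  filter_upwards [measure_eq_zero_iff_ae_notMem.1 h, measure_eq_zero_iff_ae_notMem.1 h']
    with z hz hz'
  exact ⟨not_not.1 hz, not_not.1 hz'⟩

/-- A continuous function on a compact product is integrable against any coupling of measures
concentrated on the factors. -/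
lemma integrable_of_continuousOn_of_fst_snd {X Y : Type*} [TopologicalSpace X] [T2Space X]
    [TopologicalSpace Y] [T2Space Y] [MeasurableSpace X] [MeasurableSpace Y]
    [BorelSpace (X × Y)] [OpensMeasurableSpace X] [OpensMeasurableSpace Y]
    {γ : Measure (X × Y)} [IsFiniteMeasure γ] {K : Set X} {K' : Set Y} (hK : IsCompact K)
    (hK' : IsCompact K') (h : γ.fst Kᶜ = 0) (h' : γ.snd K'ᶜ = 0) {f : X × Y → ℝ}
    (hf : ContinuousOn f (K ×ˢ K')) : Integrable f γ := by
  rw [← Measure.restrict_eq_self_of_ae_mem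
    (ae_mem_prod_of_fst_snd hK.measurableSet hK'.measurableSet h h')]
  exact hf.integrableOn_compact' (hK.prod hK') (hK.measurableSet.prod hK'.measurableSet)

end LowerBound

/-- **Lower bound for infinitesimally twisted costs**: for a `C²` infinitesimally twisted cost
on open convex sets and compactly supported marginals with `L^∞` densities,
`v_ε ≥ v₀ + (d/2) ε log(1/ε) − m ε` for all `ε > 0`. -/
theorem entCost_lower_bound_twisted {d : ℕ}
    (Ωm Ωp : Set (EuclideanSpace ℝ (Fin d)))
    (hΩmo : IsOpen Ωm) (hΩpo : IsOpen Ωp) (hΩmc : Convex ℝ Ωm) (hΩpc : Convex ℝ Ωp)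
    (μm μp : Measure (EuclideanSpace ℝ (Fin d)))
    [IsProbabilityMeasure μm] [IsProbabilityMeasure μp]
    (hsm : ∃ K, IsCompact K ∧ K ⊆ Ωm ∧ μm Kᶜ = 0)
    (hsp : ∃ K, IsCompact K ∧ K ⊆ Ωp ∧ μp Kᶜ = 0)
    (hacm : μm ≪ volume) (hacp : μp ≪ volume)
    (hbdm : ∃ C : ℝ≥0∞, C ≠ ⊤ ∧ ∀ᵐ x ∂volume, μm.rnDeriv volume x ≤ C)
    (hbdp : ∃ C : ℝ≥0∞, C ≠ ⊤ ∧ ∀ᵐ x ∂volume, μp.rnDeriv volume x ≤ C)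
    (c : EuclideanSpace ℝ (Fin d) × EuclideanSpace ℝ (Fin d) → ℝ)
    (hc : ContDiffOn ℝ 2 c (Ωm ×ˢ Ωp))
    (htwist : ∀ x ∈ Ωm, ∀ y ∈ Ωp, (crossDeriv c x y).det ≠ 0) :
    ∃ m : ℝ, 0 ≤ m ∧ ∀ ε : ℝ, 0 < ε →
      entCost μm μp c 0 + (((d : ℝ) / 2 * ε * Real.log (1 / ε) - m * ε : ℝ) : EReal)
        ≤ entCost μm μp c ε := by
  obtain ⟨K, hK, hKΩ, hμK⟩ := hsm
  obtain ⟨K', hK', hKΩ', hνK⟩ := hsp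
  obtain ⟨M, hM, hbdm⟩ := hbdm
  obtain ⟨N, hN, hbdp⟩ := hbdp
  have hcd : ∀ p ∈ K ×ˢ K', ContDiffAt ℝ 2 c p := fun p hp =>
    hc.contDiffAt ((hΩmo.prod hΩpo).mem_nhds ⟨hKΩ hp.1, hKΩ' hp.2⟩)
  have hcc : ContinuousOn c (K ×ˢ K') := fun p hp => (hcd p hp).continuousAt.continuousWithinAt
  obtain ⟨C, hC, hlap⟩ := exists_lintegral_prod_exp_neg_div_le hK hK' hcd
    (fun x hx y hy => htwist x (hKΩ hx) y (hKΩ' hy)) hμK hνK hM hN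
    (measure_le_smul_of_rnDeriv_le hacm hbdm) (measure_le_smul_of_rnDeriv_le hacp hbdp)
  obtain ⟨γ₀, hγ₀, hfst₀, hsnd₀, hdual⟩ :=
    exists_coupling_forall_exists_potentials_of_compact hK hK' hμK hνK hcc
  refine ⟨max (log C) 0, le_max_right _ _, fun ε hε => ?_⟩
  have hv₀ : entCost μm μp c 0 ≤ ((∫ p, c p ∂γ₀ : ℝ) : EReal) :=
    sInf_le ⟨γ₀, hγ₀, hfst₀, hsnd₀, by simp⟩
  refine (add_le_add_left hv₀ _).trans (le_sInf ?_)
  rintro _ ⟨γ, hγ, hfst, hsnd, rfl⟩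
  by_cases hEnt : γ ≪ μm.prod μp ∧ Integrable (fun x => ((γ.rnDeriv (μm.prod μp)) x).toReal *
      Real.log ((γ.rnDeriv (μm.prod μp)) x).toReal) (μm.prod μp)
  · rw [Ent, if_pos hEnt]
    norm_cast
    refine le_of_forall_pos_le_add fun δ hδ => ?_
    obtain ⟨φ, ψ, hφψ, hopt⟩ := hdual δ hδ
    have hint : ∀ f : EuclideanSpace ℝ (Fin d) × EuclideanSpace ℝ (Fin d) → ℝ,
        ContinuousOn f (K ×ˢ K') → Integrable f γ := fun f hf =>
      integrable_of_continuousOn_of_fst_snd hK hK' (hfst ▸ hμK) (hsnd ▸ hνK) hf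
    have hcm : AEMeasurable c (μm.prod μp) :=
      (integrable_of_continuousOn_of_fst_snd hK hK' (by simpa using hμK) (by simpa using hνK)
        hcc).aemeasurable
    have hφi : Integrable (fun z => φ z.1) γ := hint _ (by fun_prop)
    have hψi : Integrable (fun z => ψ z.2) γ := hint _ (by fun_prop)
    have hci := hint c hcc
    have hcφi : Integrable (fun z => c z - φ z.1) γ := hci.sub hφi
    have hgibbs := neg_log_le_integral_add_integral_rnDeriv_mul_log hEnt.1 hEnt.2
      (D := fun q => (c q - φ q.1 - ψ q.2) / ε) ((hcφi.sub hψi).div_const ε)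
      (((hcm.sub (by fun_prop)).sub (by fun_prop)).div_const ε)
      (B := C * ε ^ ((d : ℝ) / 2)) (by positivity) (hlap φ ψ hφψ ε hε)
    have hφ : ∫ z, φ z.1 ∂γ = ∫ x, φ x ∂μm := by
      rw [← hfst, Measure.fst, integral_map (by fun_prop) φ.continuous.aestronglyMeasurable]
    have hψ : ∫ z, ψ z.2 ∂γ = ∫ y, ψ y ∂μp := by
      rw [← hsnd, Measure.snd, integral_map (by fun_prop) ψ.continuous.aestronglyMeasurable]
    rw [integral_div, integral_sub hcφi hψi, integral_sub hci hφi, hφ, hψ,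
      log_mul hC.ne' (by positivity), log_rpow hε] at hgibbs
    have hmul := mul_le_mul_of_nonneg_left hgibbs hε.le
    rw [mul_add, mul_div_cancel₀ _ hε.ne'] at hmul
    have hlog := mul_le_mul_of_nonneg_right (le_max_left (log C) 0) hε.le
    rw [one_div, log_inv]
    linarith
  · rw [Ent, if_neg hEnt, EReal.coe_mul_top_of_pos hε, EReal.coe_add_top]
    exact le_top
end
end

section
/- Let μ⁻, μ⁺ be compactly supported probability measures on ℝ^d, let c(x,y) = (1/2)|x−y|², and suppose Brenier's optimal transport map from μ⁻ to μ⁺ is T = ∇f for a convex differentiable function f : ℝ^d → ℝ with ∇f Lipschitz with constant M and (∇f)_# μ⁻ = μ⁺. For ε > 0 let γ_ε be the minimizer of the entropic problem at parameter ε. Then there exists C ≥ 0 such that for every ε ∈ (0,1): ∫∫ |y − T(x)|² dγ_ε(x,y) ≤ M·( d·ε·log(1/ε) + C·ε ). -/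
open MeasureTheory Real Set Filter Classical
open scoped ENNReal NNReal Topology

noncomputable section

section ConvexGradient

variable {E : Type*} [NormedAddCommGroup E] [InnerProductSpace ℝ E] [CompleteSpace E]
  {f : E → ℝ} {T : E → E} {M : ℝ≥0}

theorem hasDerivAt_comp_line_of_gradient (hgrad : ∀ x, HasGradientAt f (T x) x) (x h : E) (t : ℝ) :
    HasDerivAt (fun s : ℝ => f (x + s • h)) (inner ℝ (T (x + t • h)) h) t := by
  have h1 : HasDerivAt (fun s : ℝ => x + s • h) h t := by
    simpa using ((hasDerivAt_id t).smul_const h).const_add x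
  have h2 := (hgrad (x + t • h)).hasFDerivAt.comp_hasDerivAt t h1
  rwa [InnerProductSpace.toDual_apply_apply] at h2

theorem ConvexOn.add_inner_gradient_le (hconv : ConvexOn ℝ Set.univ f)
    (hgrad : ∀ x, HasGradientAt f (T x) x) (x y : E) :
    f x + inner ℝ (T x) (y - x) ≤ f y := by
  have hc : ConvexOn ℝ Set.univ (fun s : ℝ => f (x + s • (y - x))) := by
    have := hconv.comp_affineMap (AffineMap.lineMap x y : ℝ →ᵃ[ℝ] E)
    have h : f ∘ (AffineMap.lineMap x y : ℝ →ᵃ[ℝ] E) = fun s : ℝ => f (x + s • (y - x)) := by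
      ext s
      simp [AffineMap.lineMap_apply, add_comm]
    rwa [h, preimage_univ] at this
  have hd := hasDerivAt_comp_line_of_gradient hgrad x (y - x) 0
  have := hc.le_slope_of_hasDerivAt (mem_univ 0) (mem_univ 1) zero_lt_one hd
  simp [slope_def_field] at this
  linarith

theorem le_add_inner_gradient_add_sq (hgrad : ∀ x, HasGradientAt f (T x) x)
    (hLip : LipschitzWith M T) (x h : E) :
    f (x + h) ≤ f x + inner ℝ (T x) h + M / 2 * ‖h‖ ^ 2 := by
  let g : ℝ → ℝ := fun t => f (x + t • h) - t * inner ℝ (T x) h - M / 2 * ‖h‖ ^ 2 * t ^ 2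
  have hg (t : ℝ) : HasDerivAt g
      (inner ℝ (T (x + t • h)) h - inner ℝ (T x) h - M / 2 * ‖h‖ ^ 2 * (2 * t)) t := by
    have h2 := ((hasDerivAt_comp_line_of_gradient hgrad x h t).sub
      ((hasDerivAt_id t).mul_const (inner ℝ (T x) h))).sub
      ((hasDerivAt_pow 2 t).const_mul (M / 2 * ‖h‖ ^ 2 : ℝ))
    exact h2.congr_deriv (by simp)
  have hanti : AntitoneOn g (Set.Icc 0 1) := by
    refine antitoneOn_of_hasDerivWithinAt_nonpos (convex_Icc 0 1)
      (fun t _ => (hg t).continuousAt.continuousWithinAt)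
      (fun t _ => (hg t).hasDerivWithinAt) (fun t ht => ?_)
    have ht0 : 0 ≤ t := by
      rw [interior_Icc] at ht
      exact ht.1.le
    have h1 : inner ℝ (T (x + t • h) - T x) h ≤ M * (t * ‖h‖) * ‖h‖ := by
      refine (real_inner_le_norm _ _).trans (mul_le_mul_of_nonneg_right ?_ (norm_nonneg _))
      have := hLip.norm_sub_le (x + t • h) x
      rwa [add_sub_cancel_left, norm_smul, Real.norm_of_nonneg ht0] at this
    rw [inner_sub_left] at h1
    nlinarith
  have := hanti (by simp) (by simp) zero_le_one
  simp [g] at this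
  linarith

theorem ConvexOn.norm_gradient_sub_sq_le (hconv : ConvexOn ℝ Set.univ f)
    (hgrad : ∀ x, HasGradientAt f (T x) x) (hLip : LipschitzWith M T) (x y : E) :
    ‖T x - T y‖ ^ 2 ≤ 2 * M * (f x - f y - inner ℝ (T y) (x - y)) := by
  rcases eq_or_ne M 0 with rfl | hM
  · have := hLip.norm_sub_le x y
    simp only [NNReal.coe_zero, zero_mul, norm_le_zero_iff] at this
    simp [this]
  · have hM' : (0 : ℝ) < M := by positivity
    set D := T x - T y with hD
    have h1 := hconv.add_inner_gradient_le hgrad y (x + -(M : ℝ)⁻¹ • D)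
    have h2 := le_add_inner_gradient_add_sq hgrad hLip x (-(M : ℝ)⁻¹ • D)
    have h3 : x + -(M : ℝ)⁻¹ • D - y = (x - y) + -(M : ℝ)⁻¹ • D := by abel
    have h4 : inner ℝ (T x) D - inner ℝ (T y) D = ‖D‖ ^ 2 := by
      rw [← inner_sub_left, ← hD, real_inner_self_eq_norm_sq]
    have h5 : ‖-(M : ℝ)⁻¹ • D‖ ^ 2 = (M : ℝ)⁻¹ ^ 2 * ‖D‖ ^ 2 := by
      rw [norm_smul, mul_pow, norm_neg, norm_inv, Real.norm_of_nonneg hM'.le]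
    rw [h3, inner_add_right, inner_smul_right] at h1
    rw [h5, inner_smul_right] at h2
    have h6 : (M : ℝ)⁻¹ / 2 * ‖D‖ ^ 2 ≤ f x - f y - inner ℝ (T y) (x - y) := by
      have : (M : ℝ) / 2 * ((M : ℝ)⁻¹ ^ 2 * ‖D‖ ^ 2) = (M : ℝ)⁻¹ / 2 * ‖D‖ ^ 2 := by
        field_simp
      rw [this] at h2
      rw [← h4] at h2 ⊢
      linarith
    calc ‖D‖ ^ 2 = 2 * M * ((M : ℝ)⁻¹ / 2 * ‖D‖ ^ 2) := by field_simp
      _ ≤ _ := by gcongr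

theorem ConvexOn.sub_sub_inner_gradient_le (hconv : ConvexOn ℝ Set.univ f)
    (hgrad : ∀ x, HasGradientAt f (T x) x) (hLip : LipschitzWith M T) (x y : E) :
    f x - f y - inner ℝ (T y) (x - y) ≤ M * ‖x - y‖ ^ 2 := by
  have h1 := hconv.add_inner_gradient_le hgrad x y
  have h2 : inner ℝ (T x - T y) (x - y) ≤ M * ‖x - y‖ * ‖x - y‖ :=
    (real_inner_le_norm _ _).trans
      (mul_le_mul_of_nonneg_right (hLip.norm_sub_le x y) (norm_nonneg _))
  rw [← neg_sub x y, inner_neg_right] at h1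
  rw [inner_sub_left] at h2
  linarith

end ConvexGradient

section Entropy

variable {α : Type*} [MeasurableSpace α]

theorem Ent_nonneg (γ q : Measure α) [IsProbabilityMeasure γ] [IsProbabilityMeasure q] :
    0 ≤ Ent γ q := by
  unfold Ent
  split_ifs with h
  · rw [← EReal.coe_zero, EReal.coe_le_coe_iff]
    have hint : Integrable (fun x => (γ.rnDeriv q x).toReal - 1) q :=
      Measure.integrable_toReal_rnDeriv.sub (integrable_const 1)
    have h1 : ∫ x, ((γ.rnDeriv q x).toReal - 1) ∂q = 0 := by
      rw [integral_sub Measure.integrable_toReal_rnDeriv (integrable_const 1),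
        Measure.integral_toReal_rnDeriv h.1]
      simp
    rw [← h1]
    exact integral_mono hint h.2 fun x => self_sub_one_le_mul_log ENNReal.toReal_nonneg
  · exact le_top

theorem rnDeriv_le_of_le_withDensity {γ q : Measure α} [IsFiniteMeasure γ] [SigmaFinite q]
    {w : α → ℝ≥0∞} (h : γ ≤ q.withDensity w) : γ.rnDeriv q ≤ᵐ[q] w := by
  refine ae_le_of_forall_setLIntegral_le_of_sigmaFinite (Measure.measurable_rnDeriv γ q)
    fun s hs _ => (Measure.setLIntegral_rnDeriv_le s).trans ?_
  rw [← withDensity_apply _ hs]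
  exact h s

theorem mul_log_le_mul_log_add {r w N : ℝ} (hr : 0 ≤ r) (hrw : r ≤ w) (hN : 0 < N) :
    r * Real.log r ≤ r * (Real.log N + (w / N - 1)) := by
  rcases hr.eq_or_lt with rfl | hr'
  · simp
  · refine mul_le_mul_of_nonneg_left ?_ hr
    have h1 := Real.log_le_sub_one_of_pos (div_pos hr' hN)
    rw [Real.log_div hr'.ne' hN.ne'] at h1
    have h2 : r / N ≤ w / N := by gcongr
    linarith

theorem Ent_le_log {γ q : Measure α} [IsProbabilityMeasure γ] [IsProbabilityMeasure q]
    {w : α → ℝ≥0} (hw : Measurable w) {W : ℝ≥0} (hW : ∀ x, w x ≤ W)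
    (h : γ ≤ q.withDensity fun x => (w x : ℝ≥0∞)) {N : ℝ} (hN : 0 < N)
    (hwN : ∫ x, (w x : ℝ) ∂γ ≤ N) : Ent γ q ≤ (Real.log N : EReal) := by
  have hac : γ ≪ q :=
    (Measure.absolutelyContinuous_of_le h).trans (withDensity_absolutelyContinuous _ _)
  have hr : ∀ᵐ x ∂q, (γ.rnDeriv q x).toReal ≤ w x := by
    filter_upwards [rnDeriv_le_of_le_withDensity h] with x hx
    exact ENNReal.toReal_le_coe_of_le_coe hx
  have hint : Integrable
      (fun x => (γ.rnDeriv q x).toReal * Real.log (γ.rnDeriv q x).toReal) q := by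
    refine Integrable.of_bound (C := max 1 ((W : ℝ) * W)) ?_ ?_
    · have := Measure.measurable_rnDeriv γ q
      exact (by fun_prop : Measurable _).aestronglyMeasurable
    · filter_upwards [hr] with x hx
      set r := (γ.rnDeriv q x).toReal
      have h0 : 0 ≤ r := ENNReal.toReal_nonneg
      have hrW : r ≤ W := hx.trans (by exact_mod_cast hW x)
      rw [Real.norm_eq_abs, abs_le']
      constructor
      · refine le_max_of_le_right ?_
        calc r * Real.log r ≤ r * r := by
              gcongr
              exact Real.log_le_self h0
          _ ≤ W * W := by gcongr
      · refine le_max_of_le_left ?_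
        linarith [self_sub_one_le_mul_log h0]
  have hwi : Integrable (fun x => (w x : ℝ)) γ :=
    Integrable.of_bound (C := (W : ℝ)) (by fun_prop)
      (ae_of_all _ fun x => by simpa using hW x)
  have hui : Integrable (fun x => Real.log N + ((w x : ℝ) / N - 1)) γ := by fun_prop
  rw [Ent, if_pos ⟨hac, hint⟩, EReal.coe_le_coe_iff]
  calc _ ≤ ∫ x, (γ.rnDeriv q x).toReal * (Real.log N + ((w x : ℝ) / N - 1)) ∂q := by
        refine integral_mono_ae hint ((integrable_toReal_rnDeriv_mul_iff hac).2 hui) ?_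
        filter_upwards [hr] with x hx
        exact mul_log_le_mul_log_add ENNReal.toReal_nonneg hx hN
    _ = Real.log N + ((∫ x, (w x : ℝ) ∂γ) / N - 1) := by
        rw [integral_toReal_rnDeriv_mul hac, integral_add (integrable_const _) (by fun_prop),
          integral_sub (by fun_prop) (integrable_const _), integral_div]
        simp
    _ ≤ Real.log N := by
        have := (div_le_one hN).2 hwN
        linarith

end Entropy

section Block

variable {X Y κ : Type*} [MeasurableSpace X] [MeasurableSpace Y]

/-- The block approximation at the scale of the fibers of `φ` of the plan `(id, T)_# μ`. -/
def blockPlan (μ : Measure X) (T : X → Y) (φ : X → κ) (I : Finset κ) : Measure (X × Y) :=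
  ∑ i ∈ I, (((μ (φ ⁻¹' {i})).toNNReal⁻¹ : ℝ≥0) : ℝ≥0∞) •
    (μ.restrict (φ ⁻¹' {i})).prod ((μ.restrict (φ ⁻¹' {i})).map T)

variable {μ : Measure X} {T : X → Y} {φ : X → κ} {I : Finset κ}

theorem toNNReal_inv_mul_measure_mul_measure_inter (μ : Measure X) [IsFiniteMeasure μ]
    (A S : Set X) :
    (((μ A).toNNReal⁻¹ : ℝ≥0) : ℝ≥0∞) * (μ A * μ (S ∩ A)) = μ (S ∩ A) := by
  by_cases h : μ A = 0
  · simp [measure_mono_null inter_subset_right h]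
  · have h' : (μ A).toNNReal ≠ 0 := (ENNReal.toNNReal_ne_zero).2 ⟨h, measure_ne_top μ A⟩
    rw [← mul_assoc, ENNReal.coe_inv h', ENNReal.coe_toNNReal (measure_ne_top μ A),
      ENNReal.inv_mul_cancel h (measure_ne_top μ A), one_mul]

theorem sum_measure_inter_fiber (hφ : ∀ i, MeasurableSet (φ ⁻¹' {i})) (hI : ∀ᵐ x ∂μ, φ x ∈ I)
    {S : Set X} (hS : MeasurableSet S) : ∑ i ∈ I, μ (S ∩ φ ⁻¹' {i}) = μ S := by
  rw [← measure_biUnion_finset (fun i _ j _ hij => ?_) fun i _ => hS.inter (hφ i)]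
  · refine measure_congr ?_
    filter_upwards [hI] with x hx
    refine propext ⟨fun h => ?_, fun h => ?_⟩
    · obtain ⟨i, -, hi⟩ := mem_iUnion₂.1 h
      exact hi.1
    · exact mem_iUnion₂.2 ⟨φ x, hx, h, rfl⟩
  · refine Set.disjoint_left.2 fun x hx hx' => hij ?_
    exact hx.2.symm.trans hx'.2

theorem blockPlan_fst [IsProbabilityMeasure μ] (hT : Measurable T)
    (hφ : ∀ i, MeasurableSet (φ ⁻¹' {i}))
    (hI : ∀ᵐ x ∂μ, φ x ∈ I) : (blockPlan μ T φ I).fst = μ := by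
  ext S hS
  rw [Measure.fst_apply hS, ← sum_measure_inter_fiber hφ hI hS, blockPlan,
    Measure.finsetSum_apply]
  refine Finset.sum_congr rfl fun i _ => ?_
  rw [← prod_univ, Measure.smul_apply, Measure.prod_prod, Measure.map_apply hT .univ,
    preimage_univ, Measure.restrict_apply hS, Measure.restrict_apply_univ, smul_eq_mul,
    mul_comm (μ (S ∩ _)), toNNReal_inv_mul_measure_mul_measure_inter]

theorem blockPlan_snd [IsProbabilityMeasure μ] (hT : Measurable T)
    (hφ : ∀ i, MeasurableSet (φ ⁻¹' {i}))
    (hI : ∀ᵐ x ∂μ, φ x ∈ I) : (blockPlan μ T φ I).snd = μ.map T := by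
  ext S hS
  rw [Measure.snd_apply hS, Measure.map_apply hT hS, ← sum_measure_inter_fiber hφ hI (hT hS),
    blockPlan, Measure.finsetSum_apply]
  refine Finset.sum_congr rfl fun i _ => ?_
  rw [← univ_prod, Measure.smul_apply, Measure.prod_prod, Measure.map_apply hT hS,
    Measure.restrict_apply (hT hS), Measure.restrict_apply_univ, smul_eq_mul,
    toNNReal_inv_mul_measure_mul_measure_inter]

theorem isProbabilityMeasure_blockPlan [IsProbabilityMeasure μ] (hT : Measurable T)
    (hφ : ∀ i, MeasurableSet (φ ⁻¹' {i}))
    (hI : ∀ᵐ x ∂μ, φ x ∈ I) : IsProbabilityMeasure (blockPlan μ T φ I) :=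
  ⟨by rw [← Measure.fst_univ, blockPlan_fst hT hφ hI, measure_univ]⟩

theorem ae_blockPlan [IsProbabilityMeasure μ] (hT : Measurable T)
    (hφ : ∀ i, MeasurableSet (φ ⁻¹' {i}))
    {P : X × Y → Prop} (hP : MeasurableSet {p | P p})
    (h : ∀ᵐ x ∂μ, ∀ᵐ x' ∂μ, φ x = φ x' → P (x, T x')) : ∀ᵐ p ∂blockPlan μ T φ I, P p := by
  rw [ae_iff, blockPlan, Measure.finsetSum_apply]
  refine Finset.sum_eq_zero fun i _ => ?_
  suffices ∀ᵐ p ∂(μ.restrict (φ ⁻¹' {i})).prod ((μ.restrict (φ ⁻¹' {i})).map T), P p by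
    rw [Measure.smul_apply, ae_iff.1 this, smul_zero]
  have := Measure.isProbabilityMeasure_map (μ := μ) hT.aemeasurable
  refine (Measure.ae_prod_iff_ae_ae hP).2 ?_
  filter_upwards [ae_restrict_of_ae h, ae_restrict_mem (hφ i)] with x hx hxi
  refine (ae_map_iff hT.aemeasurable (measurable_prodMk_left hP)).2 ?_
  filter_upwards [ae_restrict_of_ae hx, ae_restrict_mem (hφ i)] with x' hx' hxi'
  exact hx' (hxi.trans hxi'.symm)

/-- An upper bound of the density of `blockPlan μ T φ I` with respect to `μ ⊗ T_# μ`. -/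
def blockDensity (μ : Measure X) (φ : X → κ) (I : Finset κ) (x : X) : ℝ≥0 :=
  ∑ i ∈ I, (φ ⁻¹' {i}).indicator (fun _ => (μ (φ ⁻¹' {i})).toNNReal⁻¹) x

theorem measurable_blockDensity (hφ : ∀ i, MeasurableSet (φ ⁻¹' {i})) :
    Measurable (blockDensity μ φ I) :=
  Finset.measurable_fun_sum _ fun i _ => measurable_const.indicator (hφ i)

theorem blockDensity_le (x : X) :
    blockDensity μ φ I x ≤ ∑ i ∈ I, (μ (φ ⁻¹' {i})).toNNReal⁻¹ :=
  Finset.sum_le_sum fun _ _ => indicator_le_self' (fun _ _ => zero_le) x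

theorem blockPlan_le_withDensity [IsProbabilityMeasure μ] (hT : Measurable T)
    (hφ : ∀ i, MeasurableSet (φ ⁻¹' {i})) :
    blockPlan μ T φ I ≤
      (μ.prod (μ.map T)).withDensity fun p => (blockDensity μ φ I p.1 : ℝ≥0∞) := by
  have := Measure.isProbabilityMeasure_map (μ := μ) hT.aemeasurable
  refine Measure.le_iff.2 fun S hS => ?_
  have hd (p : X × Y) : (blockDensity μ φ I p.1 : ℝ≥0∞) = ∑ i ∈ I, ((φ ⁻¹' {i}) ×ˢ univ).indicator
      (fun _ => (((μ (φ ⁻¹' {i})).toNNReal⁻¹ : ℝ≥0) : ℝ≥0∞)) p := by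
    simp only [blockDensity, ENNReal.ofNNReal_finsetSum, ENNReal.coe_indicator]
    refine Finset.sum_congr rfl fun i _ => ?_
    simp [indicator]
  rw [withDensity_apply _ hS, blockPlan, Measure.finsetSum_apply]
  simp_rw [hd]
  rw [lintegral_finsetSum _ fun i _ => measurable_const.indicator ((hφ i).prod .univ)]
  refine Finset.sum_le_sum fun i _ => ?_
  rw [lintegral_indicator_const ((hφ i).prod .univ), Measure.smul_apply, smul_eq_mul,
    Measure.restrict_apply ((hφ i).prod .univ), inter_comm, ← Measure.restrict_apply hS,
    ← Measure.restrict_prod_eq_prod_univ]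
  gcongr
  exact Measure.restrict_le_self

theorem integral_blockDensity_le [IsProbabilityMeasure μ] (hφ : ∀ i, MeasurableSet (φ ⁻¹' {i})) :
    ∫ x, (blockDensity μ φ I x : ℝ) ∂μ ≤ I.card := by
  have h (x : X) : (blockDensity μ φ I x : ℝ) =
      ∑ i ∈ I, (φ ⁻¹' {i}).indicator (fun _ => (μ.real (φ ⁻¹' {i}))⁻¹) x := by
    simp [blockDensity, NNReal.coe_indicator, Measure.real]
    rfl
  simp_rw [h]
  rw [integral_finsetSum _ fun i _ => (integrable_const _).indicator (hφ i),
    Finset.card_eq_sum_ones, Nat.cast_sum]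
  refine Finset.sum_le_sum fun i _ => ?_
  rw [integral_indicator_const _ (hφ i), smul_eq_mul, Nat.cast_one]
  exact mul_inv_le_one

theorem Ent_blockPlan_le [IsProbabilityMeasure μ] (hT : Measurable T)
    (hφ : ∀ i, MeasurableSet (φ ⁻¹' {i}))
    (hI : ∀ᵐ x ∂μ, φ x ∈ I) :
    Ent (blockPlan μ T φ I) (μ.prod (μ.map T)) ≤ (Real.log I.card : EReal) := by
  have := Measure.isProbabilityMeasure_map (μ := μ) hT.aemeasurable
  have := isProbabilityMeasure_blockPlan hT hφ hI
  obtain ⟨x, hx⟩ := hI.exists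
  have hm := measurable_blockDensity (μ := μ) (I := I) hφ
  refine Ent_le_log (hm.comp measurable_fst) (fun p => blockDensity_le p.1)
    (blockPlan_le_withDensity hT hφ) (by exact_mod_cast Finset.card_pos.2 ⟨_, hx⟩) ?_
  refine le_of_eq_of_le ?_ (integral_blockDensity_le (μ := μ) hφ)
  have hfst : (blockPlan μ T φ I).map Prod.fst = μ := blockPlan_fst hT hφ hI
  have := integral_map (μ := blockPlan μ T φ I) (f := fun x => (blockDensity μ φ I x : ℝ))
    measurable_fst.aemeasurable hm.coe_nnreal_real.aestronglyMeasurable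
  rw [hfst] at this
  exact this.symm

end Block

theorem exists_cube_partition (d : ℕ) {R δ : ℝ} (hR : 0 ≤ R) (hδ : 0 < δ) (hδ1 : δ ≤ 1) :
    ∃ (φ : EuclideanSpace ℝ (Fin d) → Fin d → ℕ) (I : Finset (Fin d → ℕ)),
      (∀ i, MeasurableSet (φ ⁻¹' {i})) ∧ (∀ x ∈ Metric.closedBall 0 R, φ x ∈ I) ∧
      (∀ x ∈ Metric.closedBall 0 R, ∀ y ∈ Metric.closedBall 0 R, φ x = φ y →
        ‖x - y‖ ^ 2 ≤ d * δ ^ 2) ∧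
      Real.log I.card ≤ d * (Real.log (2 * R + 1) + Real.log (1 / δ)) := by
  have hcoord {x : EuclideanSpace ℝ (Fin d)} (hx : x ∈ Metric.closedBall 0 R) (i : Fin d) :
      |x i| ≤ R := by
    simpa using (PiLp.norm_apply_le x i).trans (mem_closedBall_zero_iff.1 hx)
  refine ⟨fun x i => ⌊(x i + R) / δ⌋₊, Fintype.piFinset fun _ => Finset.range (⌊2 * R / δ⌋₊ + 1),
    fun i => ?_, fun x hx => ?_, fun x hx y hy hxy => ?_, ?_⟩
  · refine (measurable_pi_lambda _ fun j => ?_) (measurableSet_singleton i)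
    exact Nat.measurable_floor.comp (by fun_prop)
  · simp only [Fintype.mem_piFinset, Finset.mem_range, Nat.lt_succ_iff]
    intro i
    have := (abs_le.1 (hcoord hx i)).2
    gcongr
    linarith
  · have hclose (i : Fin d) : (x i - y i) ^ 2 ≤ δ ^ 2 := by
      have hf : ⌊(x i + R) / δ⌋₊ = ⌊(y i + R) / δ⌋₊ := congrFun hxy i
      have hx0 : 0 ≤ (x i + R) / δ := div_nonneg (by linarith [(abs_le.1 (hcoord hx i)).1]) hδ.le
      have hy0 : 0 ≤ (y i + R) / δ := div_nonneg (by linarith [(abs_le.1 (hcoord hy i)).1]) hδ.le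
      have h1 := Nat.floor_le hx0
      have h2 := Nat.lt_floor_add_one ((x i + R) / δ)
      have h3 := Nat.floor_le hy0
      have h4 := Nat.lt_floor_add_one ((y i + R) / δ)
      rw [hf] at h1 h2
      have h5 : (x i - y i) / δ = (x i + R) / δ - (y i + R) / δ := by ring
      have h6 : |(x i - y i) / δ| ≤ 1 := by
        rw [h5, abs_le]
        constructor <;> linarith
      rw [abs_div, abs_of_pos hδ, div_le_one hδ] at h6
      exact sq_le_sq.2 (h6.trans (le_abs_self δ))
    rw [EuclideanSpace.norm_sq_eq]
    calc _ ≤ ∑ _i : Fin d, δ ^ 2 := Finset.sum_le_sum fun i _ => by simpa using hclose i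
      _ = d * δ ^ 2 := by simp
  · have h1 : ((⌊2 * R / δ⌋₊ + 1 : ℕ) : ℝ) ≤ (2 * R + 1) * (1 / δ) := by
      have h2 := Nat.floor_le (show 0 ≤ 2 * R / δ by positivity)
      have h3 : 1 ≤ 1 / δ := (one_le_div hδ).2 hδ1
      push_cast
      calc _ ≤ 2 * R / δ + 1 / δ := by gcongr
        _ = _ := by ring
    have h4 := Real.log_le_log (by positivity) h1
    rw [Real.log_mul (by positivity) (by positivity)] at h4
    simp only [Fintype.card_piFinset_const, Finset.card_range, Nat.cast_pow, Real.log_pow]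
    gcongr

theorem Continuous.integrable_of_ae_mem_compact {X : Type*} [TopologicalSpace X]
    [MeasurableSpace X] [OpensMeasurableSpace X] {μ : Measure X} [IsFiniteMeasure μ] {K : Set X}
    (hK : IsCompact K) (hμ : ∀ᵐ x ∂μ, x ∈ K) {h : X → ℝ} (hh : Continuous h) :
    Integrable h μ := by
  obtain ⟨C, hC⟩ := hK.exists_bound_of_continuousOn hh.continuousOn
  refine Integrable.of_bound hh.measurable.aestronglyMeasurable C ?_
  filter_upwards [hμ] with x hx using hC x hx

theorem ae_mem_prod_of_marginals_s17 {X Y : Type*} [MeasurableSpace X] [MeasurableSpace Y]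
    {γ : Measure (X × Y)} {A : Set X} {B : Set Y} (hA : ∀ᵐ x ∂γ.fst, x ∈ A)
    (hB : ∀ᵐ y ∂γ.snd, y ∈ B) : ∀ᵐ p ∂γ, p ∈ A ×ˢ B := by
  filter_upwards [ae_of_ae_map measurable_fst.aemeasurable hA,
    ae_of_ae_map measurable_snd.aemeasurable hB] with p h1 h2 using ⟨h1, h2⟩

section Gap

variable {E : Type*} [NormedAddCommGroup E] [InnerProductSpace ℝ E]

/-- The Legendre transform of `f` restricted to `K`. -/
def legendreOn (K : Set E) (f : E → ℝ) (y : E) : ℝ :=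
  sSup ((fun x => inner ℝ x y - f x) '' K)

/-- The duality gap `f(x) + f*(y) - ⟪x, y⟫`, with the Legendre transform taken over `K`. -/
def dualityGap (K : Set E) (f : E → ℝ) (p : E × E) : ℝ :=
  f p.1 + legendreOn K f p.2 - inner ℝ p.1 p.2

theorem continuous_legendreOn {K : Set E} (hK : IsCompact K) {f : E → ℝ} (hf : Continuous f) :
    Continuous (legendreOn K f) :=
  hK.continuous_sSup (f := fun y x => inner ℝ x y - f x) (by fun_prop)

theorem continuous_dualityGap {K : Set E} (hK : IsCompact K) {f : E → ℝ} (hf : Continuous f) :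
    Continuous (dualityGap K f) := by
  have := continuous_legendreOn hK hf
  unfold dualityGap
  fun_prop

theorem dualityGap_gradient [CompleteSpace E] {K : Set E} {f : E → ℝ} {T : E → E}
    (hconv : ConvexOn ℝ Set.univ f) (hgrad : ∀ x, HasGradientAt f (T x) x) (x : E) {y : E}
    (hy : y ∈ K) : dualityGap K f (x, T y) = f x - f y - inner ℝ (T y) (x - y) := by
  have h : IsGreatest ((fun x => inner ℝ x (T y) - f x) '' K) (inner ℝ y (T y) - f y) := by
    refine ⟨⟨y, hy, rfl⟩, ?_⟩
    rintro _ ⟨z, -, rfl⟩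
    have := hconv.add_inner_gradient_le hgrad y z
    rw [inner_sub_right] at this
    simp only [real_inner_comm (T y)] at this ⊢
    linarith
  rw [dualityGap, legendreOn, h.csSup_eq, inner_sub_right, real_inner_comm (T y) x,
    real_inner_comm (T y) y]
  ring

theorem integral_cost_eq_add_integral_dualityGap [MeasurableSpace E] [BorelSpace E]
    [SecondCountableTopology E] {K L : Set E} (hK : IsCompact K)
    (hL : IsCompact L) {f : E → ℝ} (hf : Continuous f) {μ ν : Measure E} {γ : Measure (E × E)}
    [IsProbabilityMeasure γ] (hμ : γ.fst = μ) (hν : γ.snd = ν) (hγ : ∀ᵐ p ∂γ, p ∈ K ×ˢ L) :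
    ∫ p, ‖p.1 - p.2‖ ^ 2 / 2 ∂γ = ∫ x, (‖x‖ ^ 2 / 2 - f x) ∂μ +
      ∫ y, (‖y‖ ^ 2 / 2 - legendreOn K f y) ∂ν + ∫ p, dualityGap K f p ∂γ := by
  have hg := continuous_legendreOn hK hf
  have hE := continuous_dualityGap hK hf
  have hcomp := hK.prod hL
  subst hμ hν
  have h1 : Continuous fun x : E => ‖x‖ ^ 2 / 2 - f x := by fun_prop
  have h2 : Continuous fun y : E => ‖y‖ ^ 2 / 2 - legendreOn K f y := by fun_prop
  rw [Measure.fst, Measure.snd,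
    integral_map measurable_fst.aemeasurable h1.measurable.aestronglyMeasurable,
    integral_map measurable_snd.aemeasurable h2.measurable.aestronglyMeasurable,
    ← integral_add (Continuous.integrable_of_ae_mem_compact hcomp hγ (by fun_prop))
      (Continuous.integrable_of_ae_mem_compact hcomp hγ (by fun_prop)),
    ← integral_add (Continuous.integrable_of_ae_mem_compact hcomp hγ (by fun_prop))
      (hE.integrable_of_ae_mem_compact hcomp hγ)]
  refine integral_congr_ae (ae_of_all _ fun p => ?_)
  simp only [dualityGap, norm_sub_sq_real]
  ring

end Gap

theorem le_add_of_eq_entCost {α β : Type*} [MeasurableSpace α] [MeasurableSpace β]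
    {μ : Measure α} {ν : Measure β} [IsProbabilityMeasure μ] [IsProbabilityMeasure ν]
    {c : α × β → ℝ} {ε : ℝ} (hε : 0 ≤ ε) {γ η : Measure (α × β)} [IsProbabilityMeasure γ]
    [IsProbabilityMeasure η]
    (hγ : ((∫ p, c p ∂γ : ℝ) : EReal) + (ε : EReal) * Ent γ (μ.prod ν) = entCost μ ν c ε)
    (hη1 : η.fst = μ) (hη2 : η.snd = ν) {L : ℝ} (hL : Ent η (μ.prod ν) ≤ (L : EReal)) :
    ∫ p, c p ∂γ ≤ ∫ p, c p ∂η + ε * L := by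
  have hε' : (0 : EReal) ≤ ε := by exact_mod_cast hε
  rw [← EReal.coe_le_coe_iff]
  calc ((∫ p, c p ∂γ : ℝ) : EReal)
      ≤ ((∫ p, c p ∂γ : ℝ) : EReal) + (ε : EReal) * Ent γ (μ.prod ν) :=
        le_add_of_nonneg_right (mul_nonneg hε' (Ent_nonneg γ _))
    _ ≤ ((∫ p, c p ∂η : ℝ) : EReal) + (ε : EReal) * Ent η (μ.prod ν) := by
        rw [hγ]
        exact sInf_le ⟨η, inferInstance, hη1, hη2, rfl⟩
    _ ≤ ((∫ p, c p ∂η : ℝ) : EReal) + (ε : EReal) * (L : EReal) := by gcongr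
    _ = _ := by push_cast; rfl

/-- **Quantitative stability (smooth case)**: if Brenier's map `T = ∇f` between compactly
supported `μ⁻, μ⁺` is `M`-Lipschitz, then the optimal entropic plans `γ_ε` for the quadratic
cost satisfy `∫∫ |y − T(x)|² dγ_ε ≤ M (d ε log(1/ε) + C ε)`. -/
theorem entropic_stability_quadratic_smooth {d : ℕ}
    (μm μp : Measure (EuclideanSpace ℝ (Fin d)))
    [IsProbabilityMeasure μm] [IsProbabilityMeasure μp]
    (hsm : ∃ K, IsCompact K ∧ μm Kᶜ = 0) (hsp : ∃ K, IsCompact K ∧ μp Kᶜ = 0)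
    (f : EuclideanSpace ℝ (Fin d) → ℝ) (T : EuclideanSpace ℝ (Fin d) → EuclideanSpace ℝ (Fin d))
    (hconv : ConvexOn ℝ Set.univ f)
    (hgrad : ∀ x, HasGradientAt f (T x) x)
    (M : ℝ≥0) (hLip : LipschitzWith M T)
    (hpush : μm.map T = μp) :
    ∃ C : ℝ, 0 ≤ C ∧ ∀ ε ∈ Set.Ioo (0 : ℝ) 1,
      ∀ γε : Measure (EuclideanSpace ℝ (Fin d) × EuclideanSpace ℝ (Fin d)),
        IsProbabilityMeasure γε → γε.fst = μm → γε.snd = μp →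
        ((∫ p, ‖p.1 - p.2‖ ^ 2 / 2 ∂γε : ℝ) : EReal) + (ε : EReal) * Ent γε (μm.prod μp)
            = entCost μm μp (fun p => ‖p.1 - p.2‖ ^ 2 / 2) ε →
        ∫ p, ‖p.2 - T p.1‖ ^ 2 ∂γε ≤ (M : ℝ) * ((d : ℝ) * ε * Real.log (1 / ε) + C * ε) := by
  obtain ⟨K₀, hK₀, hμK₀⟩ := hsm
  subst hpush
  obtain ⟨R, hR, hKR⟩ := hK₀.isBounded.exists_pos_norm_le
  set K : Set (EuclideanSpace ℝ (Fin d)) := Metric.closedBall 0 R with hKdef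
  have hK : IsCompact K := isCompact_closedBall 0 R
  have hμK : ∀ᵐ x ∂μm, x ∈ K := by
    have : ∀ᵐ x ∂μm, x ∈ K₀ := by rwa [ae_iff]
    filter_upwards [this] with x hx using mem_closedBall_zero_iff.2 (hKR x hx)
  have hf : Continuous f :=
    continuous_iff_continuousAt.2 fun x => (hgrad x).hasFDerivAt.continuousAt
  have hT : Continuous T := hLip.continuous
  have hTK : IsCompact (T '' K) := hK.image hT
  have hνK : ∀ᵐ y ∂μm.map T, y ∈ T '' K := by
    refine (ae_map_iff hT.measurable.aemeasurable hTK.measurableSet).2 ?_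
    filter_upwards [hμK] with x hx using mem_image_of_mem T hx
  have hgap := continuous_dualityGap hK hf
  have hcomp := hK.prod hTK
  refine ⟨2 * (d * M) + 2 * (d * Real.log (2 * R + 1)), ?_, ?_⟩
  · have := Real.log_nonneg (show 1 ≤ 2 * R + 1 by linarith)
    positivity
  rintro ε ⟨hε0, hε1⟩ γ hγprob hγ1 hγ2 hγopt
  obtain ⟨φ, I, hφ, hI, hdiam, hcard⟩ := exists_cube_partition d hR.le (Real.sqrt_pos.2 hε0)
    (Real.sqrt_le_one.2 hε1.le)
  have hφI : ∀ᵐ x ∂μm, φ x ∈ I := hμK.mono hI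
  have hTm := hT.measurable
  have hη1 := blockPlan_fst hTm hφ hφI
  have hη2 := blockPlan_snd hTm hφ hφI
  have hηprob := isProbabilityMeasure_blockPlan hTm hφ hφI
  set η := blockPlan μm T φ I
  have hγK : ∀ᵐ p ∂γ, p ∈ K ×ˢ (T '' K) :=
    ae_mem_prod_of_marginals_s17 (by rwa [hγ1]) (by rwa [hγ2])
  have hηK : ∀ᵐ p ∂η, p ∈ K ×ˢ (T '' K) :=
    ae_mem_prod_of_marginals_s17 (by rwa [hη1]) (by rwa [hη2])
  have hcmp := le_add_of_eq_entCost hε0.le hγopt hη1 hη2 (Ent_blockPlan_le hTm hφ hφI)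
  rw [integral_cost_eq_add_integral_dualityGap hK hTK hf hγ1 hγ2 hγK,
    integral_cost_eq_add_integral_dualityGap hK hTK hf hη1 hη2 hηK] at hcmp
  have hηgap : ∫ p, dualityGap K f p ∂η ≤ M * (d * ε) := by
    have hae : ∀ᵐ p ∂η, dualityGap K f p ≤ M * (d * ε) := by
      refine ae_blockPlan hTm hφ (measurableSet_le hgap.measurable measurable_const) ?_
      filter_upwards [hμK] with x hx
      filter_upwards [hμK] with y hy hxy
      rw [dualityGap_gradient hconv hgrad x hy]
      refine (hconv.sub_sub_inner_gradient_le hgrad hLip x y).trans ?_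
      gcongr
      simpa [Real.sq_sqrt hε0.le] using hdiam x hx y hy hxy
    refine (integral_mono_ae (hgap.integrable_of_ae_mem_compact hcomp hηK)
      (integrable_const _) hae).trans_eq ?_
    simp
  have hγgap : ∫ p, ‖p.2 - T p.1‖ ^ 2 ∂γ ≤ 2 * M * ∫ p, dualityGap K f p ∂γ := by
    rw [← integral_const_mul]
    refine integral_mono_ae (Continuous.integrable_of_ae_mem_compact hcomp hγK (by fun_prop))
      ((hgap.integrable_of_ae_mem_compact hcomp hγK).const_mul _) ?_
    filter_upwards [hγK] with p hp
    obtain ⟨x, y⟩ := p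
    obtain ⟨z, hz, rfl⟩ := hp.2
    simp only
    rw [norm_sub_rev, dualityGap_gradient hconv hgrad x hz]
    exact hconv.norm_gradient_sub_sq_le hgrad hLip x z
  have hlog : Real.log (1 / Real.sqrt ε) = Real.log (1 / ε) / 2 := by
    rw [one_div, one_div, Real.log_inv, Real.log_inv, Real.log_sqrt hε0.le]
    ring
  rw [hlog] at hcard
  calc _ ≤ 2 * M * ∫ p, dualityGap K f p ∂γ := hγgap
    _ ≤ 2 * M * (M * (d * ε) + ε * (d * (Real.log (2 * R + 1) + Real.log (1 / ε) / 2))) := by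
        gcongr
        have := mul_le_mul_of_nonneg_left hcard hε0.le
        linarith
    _ = _ := by ring
end
end
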